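/- arXiv:2106.01058 — 3 statements merged into one kernel-verified Lean document; each statement's English description precedes it below -/
import Mathlib

section
/- Let d, k, L ∈ ℕ, let q₁,…,q_k : ℤ^L → ℤ^d be polynomial maps, and let (X, ℬ, μ, (T_g)_{g∈ℤ^d}) be a ℤ^d-measure-preserving system. If the tuple (T_{q₁(n)},…,T_{q_k(n)})_{n∈ℤ^L} is jointly ergodic for μ, then for all 1 ≤ i, j ≤ k with i ≠ j the sequence (T_{q_i(n) − q_j(n)})_{n∈ℤ^L} is ergodic for μ. -/
open MeasureTheory Filter Finset
open scoped ENNReal symmDiff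

noncomputable section

/-- A Følner sequence in `ℤ^L`: a sequence of nonempty finite subsets that is
asymptotically invariant under all translations. -/
def IsFolner (L : ℕ) (I : ℕ → Finset (Fin L → ℤ)) : Prop :=
  (∀ N, (I N).Nonempty) ∧
    ∀ g : Fin L → ℤ,
      Tendsto (fun N => ((((I N).image (g + ·)) ∆ I N).card : ℝ) / ((I N).card : ℝ))
        atTop (nhds 0)

/-- The map `q : ℤ^L → ℤ^d` is represented by the family `Q` of polynomials with
rational coefficients. -/
def RepresentedBy {L d : ℕ} (q : (Fin L → ℤ) → Fin d → ℤ)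
    (Q : Fin d → MvPolynomial (Fin L) ℚ) : Prop :=
  ∀ n t, ((q n t : ℤ) : ℚ) = MvPolynomial.eval (fun l => ((n l : ℤ) : ℚ)) (Q t)

/-- `q : ℤ^L → ℤ^d` is a polynomial map. -/
def IsPolyMap {L d : ℕ} (q : (Fin L → ℤ) → Fin d → ℤ) : Prop :=
  ∃ Q, RepresentedBy q Q

/-- The scalar map `q : ℤ^L → ℤ` is represented by the polynomial `Q` with rational
coefficients. -/
def RepresentedBy₁ {L : ℕ} (q : (Fin L → ℤ) → ℤ) (Q : MvPolynomial (Fin L) ℚ) : Prop :=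
  ∀ n, ((q n : ℤ) : ℚ) = MvPolynomial.eval (fun l => ((n l : ℤ) : ℚ)) Q

/-- The sequence `(T_{q(n)})_{n ∈ ℤ^L}` is ergodic for `μ`: Følner averages of
`f ∘ T_{q(n)}` converge in `L²(μ)` to `∫ f dμ`, for every bounded measurable `f`. -/
def ErgodicSeq {X : Type*} [MeasurableSpace X] (μ : Measure X) {d L : ℕ}
    (T : (Fin d → ℤ) → X → X) (q : (Fin L → ℤ) → Fin d → ℤ) : Prop :=
  ∀ f : X → ℂ, Measurable f → (∃ C, ∀ x, ‖f x‖ ≤ C) →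
    ∀ I : ℕ → Finset (Fin L → ℤ), IsFolner L I →
      Tendsto (fun N =>
          eLpNorm (fun x => (((I N).card : ℂ))⁻¹ * (∑ n ∈ I N, f (T (q n) x)) - ∫ y, f y ∂μ)
            2 μ)
        atTop (nhds 0)

/-- The tuple `(T_{q_1(n)}, …, T_{q_k(n)})_{n ∈ ℤ^L}` is jointly ergodic for `μ`. -/
def JointlyErgodic {X : Type*} [MeasurableSpace X] (μ : Measure X) {d L k : ℕ}
    (T : (Fin d → ℤ) → X → X) (q : Fin k → (Fin L → ℤ) → Fin d → ℤ) : Prop :=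
  ∀ f : Fin k → X → ℂ, (∀ i, Measurable (f i)) → (∀ i, ∃ C, ∀ x, ‖f i x‖ ≤ C) →
    ∀ I : ℕ → Finset (Fin L → ℤ), IsFolner L I →
      Tendsto (fun N =>
          eLpNorm (fun x => (((I N).card : ℂ))⁻¹ * (∑ n ∈ I N, ∏ i, f i (T (q i n) x)) -
              ∏ i, ∫ y, f i y ∂μ)
            2 μ)
        atTop (nhds 0)

/-- The sequence `(T_{q_1(n)} × ⋯ × T_{q_k(n)})_{n ∈ ℤ^L}` is ergodic for the product
measure `μ^{⊗k}` on `X^k`. -/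
def ProdErgodic {X : Type*} [MeasurableSpace X] (μ : Measure X) {d L k : ℕ}
    (T : (Fin d → ℤ) → X → X) (q : Fin k → (Fin L → ℤ) → Fin d → ℤ) : Prop :=
  ∀ F : (Fin k → X) → ℂ, Measurable F → (∃ C, ∀ x, ‖F x‖ ≤ C) →
    ∀ I : ℕ → Finset (Fin L → ℤ), IsFolner L I →
      Tendsto (fun N =>
          eLpNorm (fun x : Fin k → X =>
              (((I N).card : ℂ))⁻¹ * (∑ n ∈ I N, F (fun i => T (q i n) (x i))) -
                ∫ y, F y ∂(Measure.pi fun _ : Fin k => μ))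
            2 (Measure.pi fun _ : Fin k => μ))
        atTop (nhds 0)

section PolynomialMaps

variable {V C C' : Type*} [AddCommGroup V] [AddCommGroup C] [AddCommGroup C']

/-- `u : V → C` is polynomial of degree at most `D`: all its `(D + 1)`-fold differences vanish. -/
def DegreeLE : ℕ → (V → C) → Prop
  | 0, u => ∀ n, u n = u 0
  | D + 1, u => ∀ h, DegreeLE D fun n => u (n + h) - u n

namespace DegreeLE

theorem const (c : C) (D : ℕ) : DegreeLE D fun _ : V => c := by
  induction D generalizing c with
  | zero => intro n; rfl
  | succ D ih => intro h; simpa using ih 0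

theorem add {D : ℕ} {u v : V → C} (hu : DegreeLE D u) (hv : DegreeLE D v) :
    DegreeLE D fun n => u n + v n := by
  induction D generalizing u v with
  | zero => intro n; simp only [hu n, hv n]
  | succ D ih =>
    intro h
    simpa only [add_sub_add_comm] using ih (hu h) (hv h)

theorem comp_hom {D : ℕ} {u : V → C} (hu : DegreeLE D u) (φ : C →+ C') :
    DegreeLE D fun n => φ (u n) := by
  induction D generalizing u with
  | zero => intro n; simp only [hu n]
  | succ D ih =>
    intro h
    simpa only [map_sub] using ih (hu h)

theorem of_comp_injective {D : ℕ} {u : V → C} {φ : C →+ C'} (hφ : Function.Injective φ)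
    (hu : DegreeLE D fun n => φ (u n)) : DegreeLE D u := by
  induction D generalizing u with
  | zero => intro n; exact hφ (hu n)
  | succ D ih =>
    intro h
    refine ih ?_
    simpa only [map_sub] using hu h

theorem shift {D : ℕ} {u : V → C} (hu : DegreeLE D u) (a : V) :
    DegreeLE D fun n => u (n + a) := by
  induction D generalizing u with
  | zero => intro n; simp only [hu (n + a), hu (0 + a)]
  | succ D ih =>
    intro h
    simpa only [add_right_comm _ a h] using ih (hu h)

theorem sub {D : ℕ} {u v : V → C} (hu : DegreeLE D u) (hv : DegreeLE D v) :
    DegreeLE D fun n => u n - v n := by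
  simp only [sub_eq_add_neg]
  exact hu.add (hv.comp_hom (negAddMonoidHom : C →+ C))

theorem succ {D : ℕ} {u : V → C} (hu : DegreeLE D u) : DegreeLE (D + 1) u := by
  induction D generalizing u with
  | zero => intro h n; simp only [hu (n + h), hu n, hu (0 + h)]
  | succ D ih => intro h; exact ih (hu h)

theorem mono {D E : ℕ} (hDE : D ≤ E) {u : V → C} (hu : DegreeLE D u) : DegreeLE E u := by
  induction hDE with
  | refl => exact hu
  | step _ ih => exact ih.succ

theorem sub_shift {D : ℕ} {u : V → C} (hu : DegreeLE (D + 1) u) (a b : V) :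
    DegreeLE D fun n => u (n + a) - u (n + b) := by
  have := (hu (a - b)).shift b
  simpa only [add_assoc, add_sub_cancel] using this

theorem mul {R : Type*} [CommRing R] {D E : ℕ} {u v : V → R} (hu : DegreeLE D u)
    (hv : DegreeLE E v) : DegreeLE (D + E) fun n => u n * v n := by
  obtain ⟨s, hs⟩ : ∃ s, s = D + E := ⟨_, rfl⟩
  induction s generalizing D E u v with
  | zero =>
    obtain ⟨rfl, rfl⟩ : D = 0 ∧ E = 0 := by omega
    intro n; simp only [hu n, hv n]
  | succ s ih =>
    rw [← hs]
    intro h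
    have h1 : DegreeLE s fun n => u (n + h) * (v (n + h) - v n) := by
      cases E with
      | zero =>
        have : (fun n => u (n + h) * (v (n + h) - v n)) = fun _ => 0 := by
          funext n; rw [hv (n + h), hv n, sub_self, mul_zero]
        rw [this]; exact const 0 s
      | succ E =>
        have := ih (hu.shift h) (hv h) (by omega)
        exact this.mono (by omega)
    have h2 : DegreeLE s fun n => (u (n + h) - u n) * v n := by
      cases D with
      | zero =>
        have : (fun n => (u (n + h) - u n) * v n) = fun _ => 0 := by
          funext n; rw [hu (n + h), hu n, sub_self, zero_mul]
        rw [this]; exact const 0 s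
      | succ D =>
        have := ih (hu h) hv (by omega)
        exact this.mono (by omega)
    convert h1.add h2 using 2
    ring

theorem pi {ι : Type*} [Fintype ι] {D : ℕ} {u : V → ι → C}
    (hu : ∀ t, DegreeLE D fun n => u n t) : DegreeLE D u := by
  induction D generalizing u with
  | zero => intro n; funext t; exact hu t n
  | succ D ih => intro h; exact ih fun t => hu t h

theorem sum_shift_eq (u : V → C) (h n : V) (P : ℕ) :
    ∑ j ∈ range P, (u (n + j • h + h) - u (n + j • h)) = u (n + P • h) - u n := by
  induction P with
  | zero => simp
  | succ P ih => rw [sum_range_succ, ih, succ_nsmul, ← add_assoc]; abel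

/-- A polynomial map whose increments are killed by `M` is periodic. -/
theorem periodic_of_torsion {D : ℕ} {u : V → C} (hu : DegreeLE D u) {M : ℕ}
    (hM : ∀ n, M • (u n - u 0) = 0) (n h : V) : u (n + M ^ D • h) = u n := by
  induction D generalizing u n h with
  | zero => rw [hu, ← hu n]
  | succ D ih =>
    have key (x y : V) : M • (u x - u y) = 0 := by
      have : u x - u y = (u x - u 0) - (u y - u 0) := by abel
      rw [this, smul_sub, hM, hM, sub_zero]
    set s : V → C := fun m => u (m + M ^ D • h) - u m with hs
    have hper (a : V) : s (a + M ^ D • h) = s a := by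
      have e (m : V) : s m = ∑ j ∈ range (M ^ D), (u (m + j • h + h) - u (m + j • h)) :=
        (sum_shift_eq u h m _).symm
      rw [e, e]
      refine sum_congr rfl fun j _ => ?_
      rw [add_right_comm a]
      refine ih (hu h) (fun m => ?_) _ h
      rw [smul_sub, key, key, sub_zero]
    have hper' (j : ℕ) : s (n + j • M ^ D • h) = s n := by
      induction j with
      | zero => simp
      | succ j ihj => rw [succ_nsmul, ← add_assoc, hper, ihj]
    have hsum := sum_shift_eq u (M ^ D • h) n M
    rw [sum_congr rfl fun j _ => hper' j, sum_const, card_range, hs, key, smul_smul,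
      ← pow_succ'] at hsum
    exact (sub_eq_zero.mp hsum.symm)

/-- The increments of a periodic polynomial map are torsion. -/
theorem torsion_of_periodic {D : ℕ} {u : V → C} (hu : DegreeLE D u) {P : ℕ}
    (hP : ∀ n h, u (n + P • h) = u n) (n : V) : P ^ D • (u n - u 0) = 0 := by
  induction D generalizing u n with
  | zero => rw [hu n, sub_self, smul_zero]
  | succ D ih =>
    have h1 (m : V) : P ^ D • (u (m + n) - u m) = P ^ D • (u n - u 0) := by
      have := ih (hu n) (fun a b => by rw [add_right_comm, hP, hP]) m
      rw [smul_sub, sub_eq_zero] at this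
      simpa using this
    have h2 := sum_shift_eq u n 0 P
    rw [hP, sub_self] at h2
    have h3 := congrArg (fun c => P ^ D • c) h2
    simp only [smul_sum, h1, sum_const, card_range, smul_zero] at h3
    rwa [smul_smul, ← pow_succ'] at h3

end DegreeLE
end PolynomialMaps

section Averages

variable {L : ℕ}

/-- The average of `f` over the finite set `s`. -/
def avg {V : Type*} (s : Finset V) (f : V → ℂ) : ℂ := (#s : ℂ)⁻¹ * ∑ n ∈ s, f n

theorem norm_avg_le {V : Type*} {s : Finset V} {f : V → ℂ} {C : ℝ} (hC : 0 ≤ C)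
    (hf : ∀ n, ‖f n‖ ≤ C) : ‖avg s f‖ ≤ C := by
  rcases s.eq_empty_or_nonempty with rfl | hs
  · simpa [avg] using hC
  have h0 : (0 : ℝ) < #s := by exact_mod_cast hs.card_pos
  rw [avg, norm_mul, norm_inv, Complex.norm_natCast, inv_mul_le_iff₀ h0]
  simpa using norm_sum_le_of_le s fun n _ => hf n

theorem avg_const {V : Type*} {s : Finset V} (hs : s.Nonempty) (c : ℂ) :
    avg s (fun _ => c) = c := by
  have h0 : (#s : ℂ) ≠ 0 := by exact_mod_cast hs.card_pos.ne'
  rw [avg, sum_const, nsmul_eq_mul, inv_mul_cancel_left₀ h0]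

theorem avg_sum {V ι : Type*} (s : Finset V) (t : Finset ι) (f : ι → V → ℂ) :
    avg s (fun n => ∑ j ∈ t, f j n) = ∑ j ∈ t, avg s (f j) := by
  simp only [avg]
  rw [sum_comm, mul_sum]

theorem norm_avg_sq_le {V : Type*} (s : Finset V) (f : V → ℂ) :
    ‖avg s f‖ ^ 2 ≤ ‖avg s fun n => (‖f n‖ ^ 2 : ℝ)‖ := by
  rcases s.eq_empty_or_nonempty with rfl | hs
  · simp [avg]
  have h0 : (0 : ℝ) < #s := by exact_mod_cast hs.card_pos
  have e : avg s (fun n => ((‖f n‖ ^ 2 : ℝ) : ℂ)) = ((#s : ℝ)⁻¹ * ∑ n ∈ s, ‖f n‖ ^ 2 : ℝ) := by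
    simp [avg]
  rw [e, Complex.norm_real, Real.norm_of_nonneg (by positivity), avg, norm_mul, norm_inv,
    Complex.norm_natCast, mul_pow]
  have h1 : ‖∑ n ∈ s, f n‖ ^ 2 ≤ #s * ∑ n ∈ s, ‖f n‖ ^ 2 :=
    (pow_le_pow_left₀ (norm_nonneg _) (norm_sum_le _ _) 2).trans sq_sum_le_card_mul_sum_sq
  calc (#s : ℝ)⁻¹ ^ 2 * ‖∑ n ∈ s, f n‖ ^ 2
      ≤ (#s : ℝ)⁻¹ ^ 2 * (#s * ∑ n ∈ s, ‖f n‖ ^ 2) := by gcongr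
    _ = (#s : ℝ)⁻¹ * ∑ n ∈ s, ‖f n‖ ^ 2 := by field_simp

variable {I : ℕ → Finset (Fin L → ℤ)}

theorem IsFolner.avg_shift (hI : IsFolner L I) {f : (Fin L → ℤ) → ℂ} {C : ℝ}
    (hf : ∀ n, ‖f n‖ ≤ C) (h : Fin L → ℤ) :
    Tendsto (fun N => avg (I N) (fun n => f (n + h)) - avg (I N) f) atTop (nhds 0) := by
  have hlim := (hI.2 h).const_mul C
  rw [mul_zero] at hlim
  refine squeeze_zero_norm (fun N => ?_) hlim
  set A := (I N).image (h + ·) with hA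
  have h0 : (0 : ℝ) < #(I N) := by exact_mod_cast (hI.1 N).card_pos
  have e1 : ∑ n ∈ I N, f (n + h) = ∑ n ∈ A, f n := by
    rw [hA, sum_image fun x _ y _ hxy => add_left_cancel hxy]
    simp only [add_comm]
  have e2 : ∑ n ∈ A, f n - ∑ n ∈ I N, f n = ∑ n ∈ A \ I N, f n - ∑ n ∈ I N \ A, f n :=
    sum_sdiff_sub_sum_sdiff.symm
  have hcard : (#(A ∆ I N) : ℝ) = #(A \ I N) + #(I N \ A) := by
    rw [symmDiff_def, sup_eq_union, card_union_of_disjoint disjoint_sdiff_sdiff]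
    push_cast; rfl
  rw [avg, avg, ← mul_sub, e1, e2, norm_mul, norm_inv, Complex.norm_natCast, hcard]
  have h1 : ‖∑ n ∈ A \ I N, f n‖ ≤ #(A \ I N) * C := by
    simpa using norm_sum_le_of_le (A \ I N) fun n _ => hf n
  have h2 : ‖∑ n ∈ I N \ A, f n‖ ≤ #(I N \ A) * C := by
    simpa using norm_sum_le_of_le (I N \ A) fun n _ => hf n
  have h3 := norm_sub_le (∑ n ∈ A \ I N, f n) (∑ n ∈ I N \ A, f n)
  rw [inv_mul_le_iff₀ h0, mul_div_assoc', mul_div_cancel₀ _ h0.ne']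
  linarith

theorem IsFolner.avg_sum_shift (hI : IsFolner L I) {f : (Fin L → ℤ) → ℂ} {C : ℝ}
    (hf : ∀ n, ‖f n‖ ≤ C) {ι : Type*} [Fintype ι] (h : ι → Fin L → ℤ) :
    Tendsto (fun N => avg (I N) (fun n => ∑ j, f (n + h j)) - Fintype.card ι * avg (I N) f)
      atTop (nhds 0) := by
  have := tendsto_finsetSum univ fun j _ => hI.avg_shift hf (h j)
  simp only [sum_sub_distrib, sum_const, nsmul_eq_mul, ← avg_sum, card_univ, mul_zero] at this
  exact this

/-- Averages tend to zero as soon as sums over shifts exhibit square-root cancellation on average. -/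
theorem IsFolner.tendsto_avg_zero (hI : IsFolner L I) {f : (Fin L → ℤ) → ℂ}
    (hf : ∀ n, ‖f n‖ ≤ 1) {B : ℝ}
    (H : ∀ J : ℕ, 0 < J → ∃ h : Fin J → Fin L → ℤ,
      ∀ᶠ N in atTop, ‖avg (I N) fun n => (‖∑ j, f (n + h j)‖ ^ 2 : ℝ)‖ ≤ B * J) :
    Tendsto (fun N => avg (I N) f) atTop (nhds 0) := by
  rw [Metric.tendsto_nhds]
  intro ε hε
  obtain ⟨J, hJ⟩ := exists_nat_gt (max 0 (4 * B / ε ^ 2))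
  have hJ0 : (0 : ℝ) < J := (le_max_left _ _).trans_lt hJ
  have hJB : 4 * B < J * ε ^ 2 := by
    rw [← div_lt_iff₀ (by positivity)]; exact (le_max_right _ _).trans_lt hJ
  obtain ⟨h, hh⟩ := H J (by exact_mod_cast hJ0)
  have h1 := (Metric.tendsto_nhds.mp (hI.avg_sum_shift hf h)) (J * ε / 2) (by positivity)
  filter_upwards [hh, h1] with N hN hN1
  rw [dist_zero_right] at hN1 ⊢
  have h2 := (norm_avg_sq_le (I N) fun n => ∑ j, f (n + h j)).trans hN
  have h3 : ‖avg (I N) fun n => ∑ j, f (n + h j)‖ < J * ε / 2 := by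
    refine lt_of_pow_lt_pow_left₀ 2 (by positivity) (h2.trans_lt ?_)
    nlinarith
  rw [Fintype.card_fin] at hN1
  have h4 : ‖(J : ℂ) * avg (I N) f‖ < J * ε := by
    have := norm_sub_le (avg (I N) fun n => ∑ j, f (n + h j))
      ((avg (I N) fun n => ∑ j, f (n + h j)) - J * avg (I N) f)
    rw [sub_sub_cancel] at this
    linarith
  rw [norm_mul, Complex.norm_natCast] at h4
  exact lt_of_mul_lt_mul_left h4 hJ0.le

/-- Averages of periodic functions converge. -/
theorem IsFolner.tendsto_avg_of_periodic (hI : IsFolner L I) {f : (Fin L → ℤ) → ℂ} {C : ℝ}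
    (hf : ∀ n, ‖f n‖ ≤ C) {P : ℕ} (hP : 0 < P) (hper : ∀ n h, f (n + P • h) = f n) :
    ∃ c, Tendsto (fun N => avg (I N) f) atTop (nhds c) := by
  have : NeZero P := ⟨hP.ne'⟩
  let lift : (Fin L → ZMod P) → Fin L → ℤ := fun x l => (x l).cast
  let π : (Fin L → ℤ) → Fin L → ZMod P := fun n l => (n l : ZMod P)
  have hfac (n m : Fin L → ℤ) (hnm : π n = π m) : f n = f m := by
    have (l : Fin L) : ∃ c : ℤ, m l - n l = P * c :=
      (ZMod.intCast_eq_intCast_iff_dvd_sub (n l) (m l) P).mp (congrFun hnm l)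
    choose c hc using this
    rw [← hper n c]
    congr 1
    funext l
    have := hc l
    change n l + P • c l = m l
    rw [nsmul_eq_mul, ← this, add_sub_cancel]
  have hconst (n : Fin L → ℤ) : ∑ x, f (n + lift x) = ∑ x, f (lift x) := by
    rw [← Equiv.sum_comp (Equiv.addLeft (π n)) fun x => f (lift x)]
    refine sum_congr rfl fun x _ => hfac _ _ ?_
    funext l
    simp [π, lift]
  have hlim := hI.avg_sum_shift hf lift
  simp only [hconst] at hlim
  have hcard : (Fintype.card (Fin L → ZMod P) : ℂ) ≠ 0 := by
    exact_mod_cast Fintype.card_ne_zero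
  set K : ℂ := (Fintype.card (Fin L → ZMod P) : ℂ)
  refine ⟨K⁻¹ * ∑ x, f (lift x), ?_⟩
  have h2 := (hlim.const_sub (∑ x, f (lift x))).const_mul K⁻¹
  rw [sub_zero] at h2
  refine h2.congr fun N => ?_
  rw [avg_const (hI.1 N), sub_sub_cancel, inv_mul_cancel_left₀ hcard]

end Averages

section Weyl

variable {L : ℕ} {C : Type*} [AddCommGroup C]

theorem norm_geom_sum_le {z : ℂ} (hz : ‖z‖ = 1) {K : ℕ} {w : ℂ} (hw : z ^ K = w) (hw1 : w ≠ 1)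
    (J : ℕ) : ‖∑ j ∈ range J, z ^ j‖ ≤ 2 * K / ‖w - 1‖ := by
  have hpow (n : ℕ) : ‖z ^ n‖ = 1 := by rw [norm_pow, hz, one_pow]
  have h1 : ‖w - 1‖ ≤ K * ‖z - 1‖ := by
    rw [← hw, ← geom_sum_mul, norm_mul]
    gcongr
    simpa using norm_sum_le_of_le (range K) fun n _ => (hpow n).le
  have h2 : ‖∑ j ∈ range J, z ^ j‖ * ‖z - 1‖ ≤ 2 := by
    rw [← norm_mul, geom_sum_mul]
    calc ‖z ^ J - 1‖ ≤ ‖z ^ J‖ + ‖(1 : ℂ)‖ := norm_sub_le _ _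
      _ = 2 := by rw [hpow, norm_one]; norm_num
  have h3 : 0 < ‖w - 1‖ := norm_pos_iff.mpr (sub_ne_zero.mpr hw1)
  rw [le_div_iff₀ h3]
  calc ‖∑ j ∈ range J, z ^ j‖ * ‖w - 1‖ ≤ ‖∑ j ∈ range J, z ^ j‖ * (K * ‖z - 1‖) := by gcongr
    _ = K * (‖∑ j ∈ range J, z ^ j‖ * ‖z - 1‖) := by ring
    _ ≤ K * 2 := by gcongr
    _ = 2 * K := by ring

/-- The shifts along which the increments of `u` are constant up to bounded torsion. -/
def torsionShifts (u : (Fin L → ℤ) → C) : AddSubgroup (Fin L → ℤ) where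
  carrier := {h | ∃ M > 0, ∀ n m, M • ((u (n + h) - u n) - (u (m + h) - u m)) = 0}
  zero_mem' := ⟨1, one_pos, by simp⟩
  add_mem' := by
    rintro a b ⟨M, hM, ha⟩ ⟨M', hM', hb⟩
    refine ⟨M * M', by positivity, fun n m => ?_⟩
    have : (u (n + (a + b)) - u n) - (u (m + (a + b)) - u m) =
        ((u (n + a) - u n) - (u (m + a) - u m)) +
          ((u (n + a + b) - u (n + a)) - (u (m + a + b) - u (m + a))) := by
      rw [add_assoc, add_assoc]; abel
    rw [this, smul_add, mul_smul M M', mul_smul M M', hb, smul_zero, add_zero, smul_comm, ha,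
      smul_zero]
  neg_mem' := by
    rintro a ⟨M, hM, ha⟩
    refine ⟨M, hM, fun n m => ?_⟩
    have := ha (n + -a) (m + -a)
    rw [neg_add_cancel_right, neg_add_cancel_right] at this
    rw [← neg_eq_zero, ← smul_neg, ← this]
    congr 1
    abel

theorem uniform_torsion {u : (Fin L → ℤ) → C} {D : ℕ} (hu : DegreeLE D u) {m : ℕ} (hm : 0 < m)
    (H : ∀ h : Fin L → ℤ, ∃ M > 0, ∀ n, M • (u (n + m • h) - u n) = 0) :
    ∃ M > 0, ∀ n k, M • (u n - u k) = 0 := by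
  choose M hM hMu using H
  set K := ∏ l, M (Pi.single l 1) with hK
  have hK0 : 0 < K := prod_pos fun l _ => hM _
  let S : AddSubgroup (Fin L → ℤ) :=
    { carrier := {h | ∀ n, K • u (n + m • h) = K • u n}
      zero_mem' := by simp
      add_mem' := by
        intro a b ha hb n
        rw [smul_add, ← add_assoc, hb, ha]
      neg_mem' := by
        intro a ha n
        rw [← ha, smul_neg, neg_add_cancel_right] }
  have hsingle (l : Fin L) : Pi.single l 1 ∈ S := by
    intro n
    obtain ⟨c, hc⟩ : M (Pi.single l 1) ∣ K := dvd_prod_of_mem _ (mem_univ l)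
    rw [← sub_eq_zero, ← smul_sub, hc, mul_comm, mul_smul, hMu, smul_zero]
  have hall (h : Fin L → ℤ) : h ∈ S := by
    rw [← univ_sum_single h]
    refine sum_mem fun l _ => ?_
    have : (Pi.single l (h l) : Fin L → ℤ) = h l • Pi.single l 1 := by
      rw [← Pi.single_smul, smul_eq_mul, mul_one]
    rw [this]
    exact zsmul_mem (hsingle l) _
  have hw : DegreeLE D fun n => K • u n := hu.comp_hom (nsmulAddMonoidHom K)
  have h0 (n : Fin L → ℤ) : (m ^ D * K) • (u n - u 0) = 0 := by
    rw [mul_smul, smul_sub]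
    exact hw.torsion_of_periodic (fun n h => hall h n) n
  refine ⟨m ^ D * K, by positivity, fun n k => ?_⟩
  rw [← sub_sub_sub_cancel_right _ _ (u 0), smul_sub, h0, h0, sub_zero]

variable {e : AddChar C Circle}

theorem tendsto_avg_zero_of_linear (he : Function.Injective e) {u : (Fin L → ℤ) → C}
    {h : Fin L → ℤ} {K : ℕ} {c : C} (hc : c ≠ 0)
    (hper : ∀ n, u (n + h + h) - u (n + h) = u (n + h) - u n)
    (hK : ∀ n, K • (u (n + h) - u n) = c) {I : ℕ → Finset (Fin L → ℤ)} (hI : IsFolner L I) :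
    Tendsto (fun N => avg (I N) fun n => (e (u n) : ℂ)) atTop (nhds 0) := by
  have hlin (n : Fin L → ℤ) (j : ℕ) : u (n + j • h) = u n + j • (u (n + h) - u n) ∧
      u (n + j • h + h) - u (n + j • h) = u (n + h) - u n := by
    induction j with
    | zero => simp
    | succ j ih =>
      rw [succ_nsmul, ← add_assoc, hper, ih.2, succ_nsmul, ← add_assoc, ← ih.1, ← ih.2]
      simp
  have hc1 : (e c : ℂ) ≠ 1 := by
    intro hcontra
    refine hc (he ?_)
    rw [e.map_zero_eq_one]
    exact Circle.ext (by simpa using hcontra)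
  set B : ℝ := 2 * K / ‖(e c : ℂ) - 1‖
  refine hI.tendsto_avg_zero (fun n => (Circle.norm_coe _).le) (B := B ^ 2) fun J hJ =>
    ⟨fun j => (j : ℕ) • h, Eventually.of_forall fun N => norm_avg_le (by positivity) fun n => ?_⟩
  have hsum : ∑ j : Fin J, (e (u (n + (j : ℕ) • h)) : ℂ) =
      e (u n) * ∑ j ∈ range J, (e (u (n + h) - u n) : ℂ) ^ j := by
    rw [Fin.sum_univ_eq_sum_range (fun j => (e (u (n + j • h)) : ℂ)), mul_sum]
    refine sum_congr rfl fun j _ => ?_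
    rw [(hlin n j).1, e.map_add_eq_mul, e.map_nsmul_eq_pow]
    push_cast; rfl
  have hB : ‖∑ j ∈ range J, (e (u (n + h) - u n) : ℂ) ^ j‖ ≤ B := by
    refine norm_geom_sum_le (Circle.norm_coe _) ?_ hc1 J
    rw [← hK n, e.map_nsmul_eq_pow]
    push_cast; rfl
  rw [hsum, norm_mul, Circle.norm_coe, one_mul, Complex.norm_real,
    Real.norm_of_nonneg (by positivity)]
  have hJ1 : (1 : ℝ) ≤ J := by exact_mod_cast hJ
  calc _ ≤ B ^ 2 := by gcongr
    _ ≤ B ^ 2 * J := le_mul_of_one_le_right (by positivity) hJ1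

/-- Van der Corput: if differences of `e ∘ u` along infinitely many independent shifts have
vanishing averages, so does `e ∘ u`. -/
theorem tendsto_avg_zero_of_differences {u : (Fin L → ℤ) → C} {h : ℕ → Fin L → ℤ}
    {I : ℕ → Finset (Fin L → ℤ)} (hI : IsFolner L I)
    (H : ∀ i j, i ≠ j →
      Tendsto (fun N => avg (I N) fun n => (e (u (n + h i) - u (n + h j)) : ℂ)) atTop (nhds 0)) :
    Tendsto (fun N => avg (I N) fun n => (e (u n) : ℂ)) atTop (nhds 0) := by
  refine hI.tendsto_avg_zero (fun n => (Circle.norm_coe _).le) (B := 2) fun J hJ => ⟨fun j => h j, ?_⟩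
  have hsq (n : Fin L → ℤ) : ((‖∑ j : Fin J, (e (u (n + h j)) : ℂ)‖ ^ 2 : ℝ) : ℂ) =
      ∑ i : Fin J, ∑ j : Fin J, (e (u (n + h i) - u (n + h j)) : ℂ) := by
    push_cast
    rw [← Complex.mul_conj', map_sum, sum_mul_sum]
    refine sum_congr rfl fun i _ => sum_congr rfl fun j _ => ?_
    rw [e.map_sub_eq_div, Circle.coe_div, div_eq_mul_inv, ← Circle.coe_inv, Circle.coe_inv_eq_conj]
  have hlim : Tendsto (fun N => avg (I N) fun n =>
      ((‖∑ j : Fin J, (e (u (n + h j)) : ℂ)‖ ^ 2 : ℝ) : ℂ)) atTop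
      (nhds (∑ i : Fin J, ∑ j : Fin J, if i = j then 1 else 0)) := by
    simp only [hsq, avg_sum]
    refine tendsto_finsetSum _ fun i _ => tendsto_finsetSum _ fun j _ => ?_
    split_ifs with hij
    · subst hij
      simp only [sub_self, e.map_zero_eq_one, Circle.coe_one, avg_const (hI.1 _)]
      exact tendsto_const_nhds
    · exact H i j fun h => hij (Fin.ext h)
  have hJ1 : (0 : ℝ) < J := by exact_mod_cast hJ
  have hn := hlim.norm
  simp only [sum_ite_eq, mem_univ, if_true, sum_const, card_univ, Fintype.card_fin, nsmul_eq_mul,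
    mul_one, Complex.norm_natCast] at hn
  exact hn.eventually_le_const (by linarith)

theorem DegreeLE.torsion_or_tendsto (he : Function.Injective e) {D : ℕ} {u : (Fin L → ℤ) → C}
    (hu : DegreeLE D u) :
    (∃ M > 0, ∀ n k, M • (u n - u k) = 0) ∨ ∀ I, IsFolner L I →
      Tendsto (fun N => avg (I N) fun n => (e (u n) : ℂ)) atTop (nhds 0) := by
  induction D generalizing u with
  | zero => exact Or.inl ⟨1, one_pos, fun n k => by rw [hu n, hu k, sub_self, smul_zero]⟩
  | succ D ih =>
    by_cases hfin : Finite ((Fin L → ℤ) ⧸ torsionShifts u)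
    · set m := Nat.card ((Fin L → ℤ) ⧸ torsionShifts u) with hm
      have hm0 : 0 < m := Nat.card_pos
      have hmem (h : Fin L → ℤ) : m • h ∈ torsionShifts u := by
        rw [← QuotientAddGroup.eq_zero_iff, QuotientAddGroup.mk_nsmul]
        exact card_nsmul_eq_zero'
      by_cases htor : ∀ h : Fin L → ℤ, ∃ K > 0, K • (u (m • h) - u 0) = 0
      · refine Or.inl (uniform_torsion hu hm0 fun h => ?_)
        obtain ⟨K, hK, hKh⟩ := htor h
        obtain ⟨M, hM, hMh⟩ := hmem h
        refine ⟨K * M, by positivity, fun n => ?_⟩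
        have h1 := hMh n 0
        rw [smul_sub, sub_eq_zero, zero_add] at h1
        rw [mul_smul, h1, smul_comm, hKh, smul_zero]
      · right
        intro I hI
        push Not at htor
        obtain ⟨h, hh⟩ := htor
        obtain ⟨M, hM, hMh⟩ := hmem h
        set a := m • h
        have hMv (n : Fin L → ℤ) : M • (u (n + a) - u n) = M • (u a - u 0) := by
          have h1 := hMh n 0
          rwa [smul_sub, sub_eq_zero, zero_add] at h1
        have hper := (hu a).periodic_of_torsion fun n => hMh n 0
        have hs (n : Fin L → ℤ) := DegreeLE.sum_shift_eq u a n (M ^ D)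
        refine tendsto_avg_zero_of_linear he (h := M ^ D • a) (K := M)
          (c := (M ^ D * M) • (u a - u 0)) (hh _ (by positivity)) (fun n => ?_) (fun n => ?_) hI
        · rw [← hs, ← hs]
          refine sum_congr rfl fun j _ => ?_
          have := hper (n + j • a) a
          rwa [add_right_comm n] at this
        · rw [← hs, smul_sum]
          simp only [hMv, sum_const, card_range, mul_smul]
    · right
      intro I hI
      rw [not_finite_iff_infinite] at hfin
      set φ := Infinite.natEmbedding ((Fin L → ℤ) ⧸ torsionShifts u)
      refine tendsto_avg_zero_of_differences (h := fun i => (φ i).out) hI fun i j hij => ?_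
      refine ((ih (hu.sub_shift _ _)).resolve_left ?_) I hI
      rintro ⟨M, hM, hMx⟩
      refine hij (φ.injective ?_)
      rw [← (φ i).out_eq', ← (φ j).out_eq', eq_comm]
      refine QuotientAddGroup.eq.mpr ⟨M, hM, fun n m => ?_⟩
      have := hMx (n - (φ j).out) (m - (φ j).out)
      simp only [sub_add_cancel] at this
      have hshift (k : Fin L → ℤ) : k + (-(φ j).out + (φ i).out) = k - (φ j).out + (φ i).out := by
        rw [← add_assoc, ← sub_eq_add_neg]
      rw [hshift, hshift]
      exact this

theorem DegreeLE.exists_tendsto_avg (he : Function.Injective e) {D : ℕ} {u : (Fin L → ℤ) → C}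
    (hu : DegreeLE D u) {I : ℕ → Finset (Fin L → ℤ)} (hI : IsFolner L I) :
    ∃ c, Tendsto (fun N => avg (I N) fun n => (e (u n) : ℂ)) atTop (nhds c) := by
  rcases hu.torsion_or_tendsto he with ⟨M, hM, h⟩ | h
  · refine hI.tendsto_avg_of_periodic (C := 1) (P := M ^ D)
      (fun n => (Circle.norm_coe _).le) (by positivity) fun n k => ?_
    rw [hu.periodic_of_torsion (fun n => h n 0)]
  · exact ⟨0, h I hI⟩

end Weyl

section Integer

variable {L d : ℕ}

theorem exists_degreeLE_eval (Q : MvPolynomial (Fin L) ℚ) :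
    ∃ D, DegreeLE D fun n : Fin L → ℤ => MvPolynomial.eval (fun l => ((n l : ℤ) : ℚ)) Q := by
  induction Q using MvPolynomial.induction_on with
  | C a => exact ⟨0, by simpa using DegreeLE.const a 0⟩
  | add p q hp hq =>
    obtain ⟨D, hD⟩ := hp
    obtain ⟨E, hE⟩ := hq
    refine ⟨max D E, ?_⟩
    simp only [map_add]
    exact (hD.mono (le_max_left _ _)).add (hE.mono (le_max_right _ _))
  | mul_X p i hp =>
    obtain ⟨D, hD⟩ := hp
    refine ⟨D + 1, ?_⟩
    simp only [map_mul, MvPolynomial.eval_X]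
    refine hD.mul fun h => ?_
    simpa using DegreeLE.const (V := Fin L → ℤ) ((h i : ℤ) : ℚ) 0

theorem IsPolyMap.exists_degreeLE {q : (Fin L → ℤ) → Fin d → ℤ} (hq : IsPolyMap q) :
    ∃ D, DegreeLE D q := by
  obtain ⟨Q, hQ⟩ := hq
  choose D hD using fun t => exists_degreeLE_eval (Q t)
  refine ⟨univ.sup D, DegreeLE.pi fun t => DegreeLE.of_comp_injective
    (φ := Int.castAddHom ℚ) Int.cast_injective ?_⟩
  have := (hD t).mono (le_sup (mem_univ t) : D t ≤ univ.sup D)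
  simp only [← hQ _ t] at this
  exact this

/-- Weyl's theorem: averages of a character along a polynomial map converge. -/
theorem exists_tendsto_avg_character {G : Type*} [AddCommGroup G] (χ : AddChar G Circle) {D : ℕ}
    {p : (Fin L → ℤ) → G} (hp : DegreeLE D p) {I : ℕ → Finset (Fin L → ℤ)} (hI : IsFolner L I) :
    ∃ c, Tendsto (fun N => avg (I N) fun n => (χ (p n) : ℂ)) atTop (nhds c) := by
  let e : AddChar (Additive Circle) Circle :=
    { toFun := Additive.toMul, map_zero_eq_one' := rfl, map_add_eq_mul' := fun _ _ => rfl }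
  have hu : DegreeLE D fun n => χ.toAddMonoidHom (p n) := hp.comp_hom _
  exact hu.exists_tendsto_avg (e := e) Additive.toMul.injective hI

end Integer

section Spectral

open WeakDual ContinuousLinearMap
open scoped CompactlySupported

variable {H : Type*} [NormedAddCommGroup H] [InnerProductSpace ℂ H] [CompleteSpace H]

theorem re_inner_star_mul_self (T : H →L[ℂ] H) (f : H) :
    RCLike.re (inner ℂ f ((star T * T) f)) = ‖T f‖ ^ 2 := by
  rw [mul_apply_eq_comp, star_eq_adjoint, adjoint_inner_right, inner_self_eq_norm_sq]

/-- Spectral measures for representations of commutative C⋆-algebras. -/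
theorem exists_spectral_measure {A : Type*} [CommCStarAlgebra A]
    [MeasurableSpace (characterSpace ℂ A)] [BorelSpace (characterSpace ℂ A)]
    (ρ : A →⋆ₐ[ℂ] (H →L[ℂ] H)) (f : H) :
    ∃ σ : Measure (characterSpace ℂ A), IsFiniteMeasure σ ∧
      ∀ a, ‖ρ a f‖ ^ 2 = ∫ χ, ‖χ a‖ ^ 2 ∂σ := by
  set Φ := gelfandStarTransform A
  let ofR : C_c(characterSpace ℂ A, ℝ) → C(characterSpace ℂ A, ℂ) := fun F =>
    ⟨fun χ => (F χ : ℂ), by fun_prop⟩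
  let Λ₀ : C_c(characterSpace ℂ A, ℝ) →ₗ[ℝ] ℝ :=
    { toFun := fun F => RCLike.re (inner ℂ f (ρ (Φ.symm (ofR F)) f))
      map_add' := by
        intro F G
        have : ofR (F + G) = ofR F + ofR G := by ext; simp [ofR]
        simp [this]
      map_smul' := by
        intro r F
        have : ofR (r • F) = (r : ℂ) • ofR F := by ext; simp [ofR]
        rw [this, map_smul, map_smul, smul_apply, inner_smul_right]
        simp }
  have hsq (F : C_c(characterSpace ℂ A, ℝ)) (G : C(characterSpace ℂ A, ℂ))
      (hFG : ∀ χ, F χ = ‖G χ‖ ^ 2) : Λ₀ F = ‖ρ (Φ.symm G) f‖ ^ 2 := by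
    have : ofR F = star G * G := by
      ext χ
      simp [ofR, hFG, Complex.conj_mul']
    change RCLike.re (inner ℂ f (ρ (Φ.symm (ofR F)) f)) = _
    rw [this, map_mul, map_star, map_mul, map_star, re_inner_star_mul_self]
  let Λ : C_c(characterSpace ℂ A, ℝ) →ₚ[ℝ] ℝ := PositiveLinearMap.mk₀ Λ₀ <| by
    intro F hF
    have hF' (χ) : 0 ≤ F χ := hF χ
    rw [hsq F ⟨fun χ => ((√(F χ) : ℝ) : ℂ), by fun_prop⟩ fun χ => by
      simp [Real.sq_sqrt (hF' χ)]]
    positivity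
  refine ⟨RealRMK.rieszMeasure Λ, inferInstance, fun a => ?_⟩
  let F : C_c(characterSpace ℂ A, ℝ) :=
    { toFun := fun χ => ‖Φ a χ‖ ^ 2
      continuous_toFun := by fun_prop
      hasCompactSupport' := HasCompactSupport.of_compactSpace _ }
  have h1 := RealRMK.integral_rieszMeasure Λ F
  have h2 : Λ F = ‖ρ (Φ.symm (Φ a)) f‖ ^ 2 := hsq F (Φ a) fun χ => rfl
  rw [StarAlgEquiv.symm_apply_apply] at h2
  rw [← h2, ← h1]
  rfl

/-- If the averages of every character along `p` converge, so do the averages of any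
representation by commuting unitaries on a commutative C⋆-algebra. -/
theorem cauchySeq_avg_of_character {A G V : Type*} [CommCStarAlgebra A] [AddCommGroup G]
    (ρ : A →⋆ₐ[ℂ] (H →L[ℂ] H)) {U : G → A} (hU0 : U 0 = 1) (hU : ∀ g h, U (g + h) = U g * U h)
    (hUs : ∀ g, star (U g) = U (-g)) {p : V → G} {I : ℕ → Finset V}
    (hI : ∀ χ : AddChar G Circle,
      ∃ c, Tendsto (fun N => avg (I N) fun n => (χ (p n) : ℂ)) atTop (nhds c)) (f : H) :
    CauchySeq fun N => ((#(I N) : ℂ)⁻¹ • ∑ n ∈ I N, ρ (U (p n)) f) := by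
  let _ : MeasurableSpace (characterSpace ℂ A) := borel _
  have : BorelSpace (characterSpace ℂ A) := ⟨rfl⟩
  obtain ⟨σ, hσ, hspec⟩ := exists_spectral_measure ρ f
  have hnorm (χ : characterSpace ℂ A) (g : G) : ‖χ (U g)‖ = 1 := by
    have h1 : star (χ (U g)) * χ (U g) = 1 := by
      rw [← map_star, hUs, ← map_mul, ← hU, neg_add_cancel, hU0, map_one]
    rw [Complex.star_def, Complex.conj_mul'] at h1
    have h2 : ‖χ (U g)‖ ^ 2 = 1 := by exact_mod_cast h1
    exact (pow_eq_one_iff_of_nonneg (norm_nonneg _) two_ne_zero).mp h2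
  let X (χ : characterSpace ℂ A) : AddChar G Circle :=
    { toFun := fun g => ⟨χ (U g), mem_sphere_zero_iff_norm.mpr (hnorm χ g)⟩
      map_zero_eq_one' := Circle.ext ((congrArg χ hU0).trans (map_one χ))
      map_add_eq_mul' := fun g h => Circle.ext ((congrArg χ (hU g h)).trans (map_mul χ _ _)) }
  let a : ℕ → A := fun N => (#(I N) : ℂ)⁻¹ • ∑ n ∈ I N, U (p n)
  have ha (N : ℕ) (χ : characterSpace ℂ A) : χ (a N) = avg (I N) fun n => (X χ (p n) : ℂ) := by
    simp only [a, avg, map_smul, map_sum, smul_eq_mul]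
    rfl
  have hρ (N : ℕ) : ρ (a N) f = (#(I N) : ℂ)⁻¹ • ∑ n ∈ I N, ρ (U (p n)) f := by
    simp [a]
  have hle (N : ℕ) (χ : characterSpace ℂ A) : ‖χ (a N)‖ ≤ 1 := by
    rw [ha]
    exact norm_avg_le zero_le_one fun n => (Circle.norm_coe _).le
  simp only [← hρ]
  rw [cauchySeq_iff_tendsto_dist_atTop_0]
  have hlim : Tendsto (fun N : ℕ × ℕ => ∫ χ : characterSpace ℂ A, ‖χ (a N.1 - a N.2)‖ ^ 2 ∂σ)
      atTop (nhds (∫ χ : characterSpace ℂ A, 0 ∂σ)) := by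
    refine tendsto_integral_filter_of_dominated_convergence (fun _ => 2 ^ 2)
      (Eventually.of_forall fun N => ?_) (Eventually.of_forall fun N => ae_of_all _ fun χ => ?_)
      (integrable_const _) (ae_of_all _ fun χ => ?_)
    · have hc : Continuous fun χ : characterSpace ℂ A => χ (a N.1 - a N.2) :=
        (gelfandStarTransform A (a N.1 - a N.2)).continuous
      exact (hc.norm.pow 2).aestronglyMeasurable
    · rw [Real.norm_of_nonneg (by positivity), map_sub]
      have := norm_sub_le (χ (a N.1)) (χ (a N.2))
      have := hle N.1 χ
      have := hle N.2 χ
      gcongr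
      linarith
    · obtain ⟨c, hc⟩ := hI (X χ)
      simp only [← ha] at hc
      rw [← prod_atTop_atTop_eq]
      have := (hc.comp tendsto_fst).sub (hc.comp (tendsto_snd (f := (atTop : Filter ℕ))))
      simpa using (this.norm.pow 2)
  rw [integral_zero] at hlim
  have hsqrt := hlim.sqrt
  rw [Real.sqrt_zero] at hsqrt
  refine hsqrt.congr fun N => ?_
  rw [← hspec, Real.sqrt_sq (norm_nonneg _), map_sub, sub_apply, dist_eq_norm]

/-- The version of `cauchySeq_avg_of_character` for unitary representations of abelian groups. -/
theorem cauchySeq_avg_of_unitary {G V : Type*} [AddCommGroup G]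
    {U : G → H →L[ℂ] H} (hU0 : U 0 = 1) (hU : ∀ g h, U (g + h) = U g * U h)
    (hUs : ∀ g, star (U g) = U (-g)) {p : V → G} {I : ℕ → Finset V}
    (hI : ∀ χ : AddChar G Circle,
      ∃ c, Tendsto (fun N => avg (I N) fun n => (χ (p n) : ℂ)) atTop (nhds c)) (f : H) :
    CauchySeq fun N => ((#(I N) : ℂ)⁻¹ • ∑ n ∈ I N, U (p n) f) := by
  have hcomm (g h : G) : U g * U h = U h * U g := by rw [← hU, add_comm, hU]
  let S := StarAlgebra.adjoin ℂ (Set.range U)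
  let A := S.topologicalClosure
  have hS : ∀ x y : S, x * y = y * x := by
    have := StarAlgebra.isMulCommutative_adjoin (s := Set.range U) ℂ
      (by rintro _ ⟨g, rfl⟩ _ ⟨h, rfl⟩; exact hcomm g h)
      (by rintro _ ⟨g, rfl⟩ _ ⟨h, rfl⟩; rw [hUs]; exact hcomm g _)
    exact fun x y => this.is_comm.comm x y
  have hclosed : IsClosed (A : Set (H →L[ℂ] H)) := S.isClosed_topologicalClosure
  let _ : CStarAlgebra A := StarSubalgebra.cstarAlgebra A (h_closed := hclosed)
  let _ : CommCStarAlgebra A :=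
    { mul_comm := (S.commRingTopologicalClosure hS).mul_comm }
  have hmem (g : G) : U g ∈ A :=
    S.le_topologicalClosure (StarAlgebra.subset_adjoin ℂ _ ⟨g, rfl⟩)
  exact cauchySeq_avg_of_character (A := A) A.subtype (U := fun g => ⟨U g, hmem g⟩)
    (Subtype.ext hU0) (fun g h => Subtype.ext (hU g h)) (fun g => Subtype.ext (hUs g)) hI f

end Spectral

section Koopman

variable {X : Type*} [MeasurableSpace X] {μ : Measure X}

theorem tendsto_integral_zero_of_eLpNorm [IsProbabilityMeasure μ] {Y : ℕ → X → ℂ}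
    (hY : ∀ N, AEStronglyMeasurable (Y N) μ)
    (h : Tendsto (fun N => eLpNorm (Y N) 2 μ) atTop (nhds 0)) :
    Tendsto (fun N => ∫ x, Y N x ∂μ) atTop (nhds 0) := by
  rw [tendsto_zero_iff_enorm_tendsto_zero]
  refine tendsto_of_tendsto_of_tendsto_of_le_of_le tendsto_const_nhds h (fun _ => zero_le)
    fun N => ?_
  calc ‖∫ x, Y N x ∂μ‖ₑ ≤ eLpNorm (Y N) 1 μ := by
        rw [eLpNorm_one_eq_lintegral_enorm]; exact enorm_integral_le_lintegral_enorm _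
    _ ≤ eLpNorm (Y N) 2 μ := eLpNorm_le_eLpNorm_of_exponent_le (by norm_num) (hY N)

theorem Lp_eq_of_forall_setIntegral_eq [IsFiniteMeasure μ] {F G : Lp ℂ 2 μ}
    (h : ∀ s, MeasurableSet s → ∫ x in s, F x ∂μ = ∫ x in s, G x ∂μ) : F = G := by
  have hF1 (F : Lp ℂ 2 μ) : Integrable F μ := (Lp.memLp F).integrable (by norm_num)
  exact Lp.ext ((hF1 F).ae_eq_of_forall_setIntegral_eq _ _ (hF1 G) fun s hs _ => h s hs)

variable {d L : ℕ} {T : (Fin d → ℤ) → X → X}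

theorem cauchySeq_avg_koopman (hT0 : T 0 = id) (hTadd : ∀ g h, T (g + h) = T g ∘ T h)
    (hTmp : ∀ g, MeasurePreserving (T g) μ μ) {D : ℕ} {p : (Fin L → ℤ) → Fin d → ℤ}
    (hp : DegreeLE D p) {I : ℕ → Finset (Fin L → ℤ)} (hI : IsFolner L I) (f : Lp ℂ 2 μ) :
    CauchySeq fun N =>
      ((#(I N) : ℂ)⁻¹ • ∑ n ∈ I N, Lp.compMeasurePreserving (T (p n)) (hTmp (p n)) f) := by
  let U (g : Fin d → ℤ) : Lp ℂ 2 μ →L[ℂ] Lp ℂ 2 μ :=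
    (Lp.compMeasurePreservingₗᵢ ℂ (T g) (hTmp g)).toContinuousLinearMap
  have happ (g : Fin d → ℤ) (x : Lp ℂ 2 μ) :
      U g x = Lp.compMeasurePreserving (T g) (hTmp g) x := rfl
  have hU0 : U 0 = 1 := by
    ext1 x
    simp only [happ, hT0]
    exact Lp.compMeasurePreserving_id_apply x
  have hU (g h : Fin d → ℤ) : U (g + h) = U g * U h := by
    ext1 x
    simp only [add_comm g h, happ, hTadd h g]
    exact Lp.compMeasurePreserving_comp_apply x (hTmp h) (hTmp g)
  have hUs (g : Fin d → ℤ) : star (U g) = U (-g) := by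
    rw [ContinuousLinearMap.star_eq_adjoint, eq_comm, ContinuousLinearMap.eq_adjoint_iff]
    intro x y
    have hx : x = U g (U (-g) x) := by
      rw [← mul_apply_eq_comp, ← hU, add_neg_cancel, hU0]; rfl
    conv_rhs => rw [hx]
    let W : Lp ℂ 2 μ →ₗᵢ[ℂ] Lp ℂ 2 μ := Lp.compMeasurePreservingₗᵢ ℂ (T g) (hTmp g)
    exact (W.inner_map_map (U (-g) x) y).symm
  exact cauchySeq_avg_of_unitary hU0 hU hUs
    (fun χ => exists_tendsto_avg_character χ hp hI) f

/-- Along polynomial maps, weak convergence of ergodic averages to the mean already gives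
ergodicity. -/
theorem ergodicSeq_of_weak [IsProbabilityMeasure μ] (hT0 : T 0 = id)
    (hTadd : ∀ g h, T (g + h) = T g ∘ T h) (hTmp : ∀ g, MeasurePreserving (T g) μ μ) {D : ℕ}
    {p : (Fin L → ℤ) → Fin d → ℤ} (hp : DegreeLE D p)
    (H : ∀ f : X → ℂ, Measurable f → (∃ C, ∀ x, ‖f x‖ ≤ C) → ∀ s, MeasurableSet s →
      ∀ I : ℕ → Finset (Fin L → ℤ), IsFolner L I →
        Tendsto (fun N => ∫ x in s, (avg (I N) fun n => f (T (p n) x)) ∂μ) atTop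
          (nhds (∫ _ in s, (∫ y, f y ∂μ) ∂μ))) :
    ErgodicSeq μ T p := by
  intro f hf hC I hI
  obtain ⟨C, hC⟩ := id hC
  have hfL : MemLp f 2 μ := MemLp.of_bound hf.aestronglyMeasurable C (ae_of_all _ hC)
  set a : ℕ → X → ℂ := fun N x => avg (I N) fun n => f (T (p n) x)
  have hTL (g : Fin d → ℤ) : MemLp (fun x => f (T g x)) 2 μ := hfL.comp_measurePreserving (hTmp g)
  have haL (N : ℕ) : MemLp (a N) 2 μ :=
    (memLp_finsetSum (I N) fun n _ => hTL (p n)).const_mul _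
  have hcL : MemLp (fun _ : X => ∫ y, f y ∂μ) 2 μ := memLp_const _
  have hcauchy := cauchySeq_avg_koopman hT0 hTadd hTmp hp hI (hfL.toLp f)
  have haeq (N : ℕ) : (#(I N) : ℂ)⁻¹ •
      ∑ n ∈ I N, Lp.compMeasurePreserving (T (p n)) (hTmp (p n)) (hfL.toLp f) =
        (haL N).toLp (a N) := by
    have hsum (s : Finset (Fin L → ℤ)) :
        ∑ n ∈ s, Lp.compMeasurePreserving (T (p n)) (hTmp (p n)) (hfL.toLp f) =
          (memLp_finsetSum s fun n _ => hTL (p n)).toLp (fun x => ∑ n ∈ s, f (T (p n) x)) := by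
      induction s using Finset.induction_on with
      | empty => simp only [sum_empty]; exact (MemLp.toLp_zero _).symm
      | insert b s hb ih =>
        simp only [sum_insert hb]
        rw [ih]
        rfl
    rw [hsum]
    rfl
  simp only [haeq] at hcauchy
  obtain ⟨F, hF⟩ := cauchySeq_tendsto_of_complete hcauchy
  have hFc : F = hcL.toLp _ := by
    refine Lp_eq_of_forall_setIntegral_eq fun s hs => ?_
    have h1 := (tendsto_const_nhds (x := indicatorConstLp 2 hs (measure_ne_top μ s) (1 : ℂ))).inner
      (𝕜 := ℂ) hF
    simp only [L2.inner_indicatorConstLp_one] at h1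
    have h2 := H f hf ⟨C, hC⟩ s hs I hI
    have h3 (N : ℕ) : ∫ x in s, (haL N).toLp (a N) x ∂μ = ∫ x in s, a N x ∂μ :=
      integral_congr_ae (ae_restrict_of_ae (haL N).coeFn_toLp)
    simp only [h3] at h1
    rw [tendsto_nhds_unique h1 h2]
    exact (integral_congr_ae (ae_restrict_of_ae hcL.coeFn_toLp)).symm
  rw [hFc] at hF
  exact (Lp.tendsto_Lp_iff_tendsto_eLpNorm'' _ haL _ hcL).mp hF

end Koopman

/-- If the tuple `(T_{q_1(n)}, …, T_{q_k(n)})_{n∈ℤ^L}` is jointly ergodic for `μ`, then for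
all `i ≠ j` the sequence `(T_{q_i(n) − q_j(n)})_{n∈ℤ^L}` is ergodic for `μ`. -/
theorem stmt2 {X : Type*} [MeasurableSpace X] (μ : Measure X) [IsProbabilityMeasure μ]
    (d k L : ℕ) (hd : 0 < d) (hk : 0 < k) (hL : 0 < L)
    (T : (Fin d → ℤ) → X → X)
    (hT0 : T 0 = id) (hTadd : ∀ g h, T (g + h) = T g ∘ T h)
    (hTmp : ∀ g, MeasurePreserving (T g) μ μ)
    (q : Fin k → (Fin L → ℤ) → Fin d → ℤ)
    (hq : ∀ i, IsPolyMap (q i))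
    (hje : JointlyErgodic μ T q) :
    ∀ i j : Fin k, i ≠ j → ErgodicSeq μ T (fun n => q i n - q j n) := by
  intro i j hij
  obtain ⟨Di, hDi⟩ := (hq i).exists_degreeLE
  obtain ⟨Dj, hDj⟩ := (hq j).exists_degreeLE
  refine ergodicSeq_of_weak hT0 hTadd hTmp
    ((hDi.mono (le_max_left Di Dj)).sub (hDj.mono (le_max_right Di Dj))) ?_
  rintro f hf ⟨C, hC⟩ s hs I hI
  set g : X → ℂ := s.indicator fun _ => 1 with hg
  have hgm : Measurable g := measurable_const.indicator hs
  have hgb (x : X) : ‖g x‖ ≤ 1 := by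
    by_cases hx : x ∈ s <;> simp [hg, hx]
  have hgi : ∫ x, g x ∂μ = μ.real s := by
    rw [hg, integral_indicator hs]; simp
  set F : Fin k → X → ℂ := fun l => if l = i then f else if l = j then g else 1 with hF
  have hFi : F i = f := by simp [hF]
  have hFj : F j = g := by simp [hF, hij.symm]
  have hF1 (l : Fin k) (hl : l ≠ i ∧ l ≠ j) : F l = 1 := by simp [hF, hl.1, hl.2]
  have hprod (n : Fin L → ℤ) (x : X) :
      ∏ l, F l (T (q l n) x) = f (T (q i n) x) * g (T (q j n) x) := by
    rw [prod_eq_mul i j hij (fun l _ hl => by rw [hF1 l hl]; rfl) (by simp) (by simp), hFi, hFj]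
  have hprodi : ∏ l, ∫ y, F l y ∂μ = (∫ y, f y ∂μ) * μ.real s := by
    rw [prod_eq_mul i j hij (fun l _ hl => by rw [hF1 l hl]; simp) (by simp) (by simp),
      hFi, hFj, hgi]
  have hTm (v : Fin d → ℤ) : Measurable (T v) := (hTmp v).measurable
  have key := hje F (fun l => by
      simp only [hF]; split_ifs
      exacts [hf, hgm, measurable_const]) (fun l => by
      simp only [hF]; split_ifs
      exacts [⟨C, hC⟩, ⟨1, hgb⟩, ⟨1, by simp⟩]) I hI
  simp only [hprod, hprodi] at key
  have hfg (n : Fin L → ℤ) : Integrable (fun x => f (T (q i n) x) * g (T (q j n) x)) μ := by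
    refine Integrable.of_bound (C := C * 1)
      ((hf.comp (hTm _)).mul (hgm.comp (hTm _))).aestronglyMeasurable (ae_of_all _ fun x => ?_)
    rw [norm_mul]
    exact mul_le_mul (hC _) (hgb _) (norm_nonneg _) ((norm_nonneg _).trans (hC x))
  have hsumint (N : ℕ) : Integrable (fun x => ((#(I N) : ℂ))⁻¹ *
      ∑ n ∈ I N, f (T (q i n) x) * g (T (q j n) x)) μ :=
    (integrable_finsetSum _ fun n _ => hfg n).const_mul _
  have h1 := tendsto_integral_zero_of_eLpNorm
    (fun N => ((hsumint N).sub (integrable_const _)).aestronglyMeasurable) key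
  have h2 := h1.add_const ((∫ y, f y ∂μ) * μ.real s)
  rw [zero_add] at h2
  have hlim : ∫ _ in s, (∫ y, f y ∂μ) ∂μ = (∫ y, f y ∂μ) * μ.real s := by
    rw [setIntegral_const, Complex.real_smul, mul_comm]
  rw [hlim]
  refine h2.congr fun N => ?_
  rw [integral_sub' (hsumint N) (integrable_const _), integral_const, probReal_univ, one_smul,
    sub_add_cancel, integral_const_mul, integral_finsetSum _ fun n _ => hfg n]
  simp only [avg]
  rw [integral_const_mul, integral_finsetSum]
  · congr 1
    refine sum_congr rfl fun n _ => ?_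
    have hTsub (x : X) : T (q i n - q j n) (T (q j n) x) = T (q i n) x := by
      rw [← Function.comp_apply (f := T _), ← hTadd, sub_add_cancel]
    have hmul (x : X) : f (T (q i n - q j n) x) * g x =
        s.indicator (fun x => f (T (q i n - q j n) x)) x := by
      by_cases hx : x ∈ s <;> simp [hg, hx]
    rw [← integral_indicator hs]
    simp only [← hmul]
    have hcomp := integral_map (μ := μ) (hTm (q j n)).aemeasurable
      (f := fun x => f (T (q i n - q j n) x) * g x)
      ((hf.comp (hTm _)).mul hgm).aestronglyMeasurable
    rw [(hTmp (q j n)).map_eq] at hcomp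
    rw [hcomp]
    simp only [hTsub]
  · intro n _
    exact Integrable.of_bound (hf.comp (hTm _)).aestronglyMeasurable C (ae_of_all _ fun x => hC _)
end
end

section
/- Let (X, ℬ, μ) be a probability space, k, L ∈ ℕ, and let T_{i,j} (1 ≤ i ≤ k, 1 ≤ j ≤ L) be pairwise commuting invertible measure-preserving transformations of X. For h = (h₁,…,h_L) ∈ ℤ^L write T_i^h := T_{i,1}^{h₁} ∘ ⋯ ∘ T_{i,L}^{h_L}, and for n ∈ ℤ^L let R_n := T_1^n × ⋯ × T_k^n acting on (X^k, μ^{⊗k}). Let 𝓘_i denote the σ-algebra of measurable sets A ⊆ X with T_{i,j}^{-1}A = A for all 1 ≤ j ≤ L. Let P(n) = α·n + β with α ∈ ℝ^L, β ∈ ℝ, and let f₁,…,f_k ∈ L^∞(μ) with ‖f_i‖_∞ ≤ 1 for all i; set f := f₁⊗⋯⊗f_k. Then for every 1 ≤ i ≤ k: sup over Følner sequences (I_N) in ℤ^L of limsup_{N→∞} ‖ |I_N|^{-1} Σ_{n∈I_N} e^{2πiP(n)} (f ∘ R_n) ‖_{L²(μ^{⊗k})}^4 ≤ 16 · limsup_{N→∞}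 (2N+1)^{-L} Σ_{h∈[−N,N]^L} ∫_X | E( (f_i ∘ T_i^h) · conj(f_i) | 𝓘_i ) |² dμ. -/
open MeasureTheory Filter Finset
open scoped ENNReal symmDiff

noncomputable section

/-- The supremum over all Følner sequences of `ℤ^L` of a quantity attached to each
Følner sequence. -/
def folnerSup (L : ℕ) (F : (ℕ → Finset (Fin L → ℤ)) → ℝ) : ℝ :=
  sSup {x | ∃ I, IsFolner L I ∧ x = F I}

/-- `e(x) = e^{2πix}`. -/
def e2pi (x : ℝ) : ℂ := Complex.exp (2 * Real.pi * Complex.I * x)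

/-- The σ-algebra of measurable sets invariant under every transformation of the
family `T`. -/
def invSigma {ι X : Type*} [MeasurableSpace X] (T : ι → X → X) : MeasurableSpace X where
  MeasurableSet' A := MeasurableSet A ∧ ∀ a, T a ⁻¹' A = A
  measurableSet_empty := ⟨MeasurableSet.empty, fun _ => Set.preimage_empty⟩
  measurableSet_compl A hA := ⟨hA.1.compl, fun a => by rw [Set.preimage_compl, hA.2 a]⟩
  measurableSet_iUnion f hf :=
    ⟨MeasurableSet.iUnion fun n => (hf n).1, fun a => by
      simp only [Set.preimage_iUnion]
      exact Set.iUnion_congr fun n => (hf n).2 a⟩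

/-- The average of the vectors `V n x` over a finite set of indices `n`. -/
def orbitAverage {G H : Type*} [NormedAddCommGroup H] [InnerProductSpace ℂ H]
    (V : G → H →L[ℂ] H) (A : Finset G) : H →L[ℂ] H :=
  (A.card : ℂ)⁻¹ • ∑ n ∈ A, V n

section MeanErgodic

variable {L : ℕ} {H : Type*} [NormedAddCommGroup H] [InnerProductSpace ℂ H]
  {V : (Fin L → ℤ) → H →L[ℂ] H}

theorem orbitAverage_apply {G : Type*} (V : G → H →L[ℂ] H) (A : Finset G) (x : H) :
    orbitAverage V A x = (A.card : ℂ)⁻¹ • ∑ n ∈ A, V n x := by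
  simp [orbitAverage]

theorem norm_orbitAverage_apply_le {G : Type*} {V : G → H →L[ℂ] H}
    (hV : ∀ g x, ‖V g x‖ ≤ ‖x‖) (A : Finset G) (x : H) :
    ‖orbitAverage V A x‖ ≤ ‖x‖ := by
  rw [orbitAverage_apply, norm_smul, norm_inv, Complex.norm_natCast]
  rcases A.eq_empty_or_nonempty with rfl | hA
  · simp
  have h : ‖∑ n ∈ A, V n x‖ ≤ A.card * ‖x‖ := by
    simpa using norm_sum_le_of_le A fun n _ => hV n x
  have hpos : (0 : ℝ) < A.card := by exact_mod_cast hA.card_pos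
  rwa [inv_mul_le_iff₀ hpos]

theorem norm_orbitAverage_coboundary_le (hV : ∀ g x, ‖V g x‖ ≤ ‖x‖)
    (hadd : ∀ g h, V (g + h) = (V g).comp (V h)) (A : Finset (Fin L → ℤ))
    (g : Fin L → ℤ) (y : H) :
    ‖orbitAverage V A (V g y - y)‖ ≤
      (((A.image (g + ·)) ∆ A).card : ℝ) / (A.card : ℝ) * ‖y‖ := by
  set B := A.image (g + ·)
  have hB : ∑ n ∈ A, V n (V g y) = ∑ n ∈ B, V n y := by
    rw [Finset.sum_image fun _ _ _ _ h => add_left_cancel h]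
    exact Finset.sum_congr rfl fun n _ => by rw [add_comm, hadd]; rfl
  have hsum : ∑ n ∈ A, V n (V g y - y) = ∑ n ∈ B \ A, V n y - ∑ n ∈ A \ B, V n y := by
    simp only [map_sub, Finset.sum_sub_distrib, hB]
    exact (Finset.sum_sdiff_sub_sum_sdiff ..).symm
  have hcard : ((B ∆ A).card : ℝ) = (B \ A).card + (A \ B).card := by
    rw [← Nat.cast_add, ← Finset.card_union_of_disjoint disjoint_sdiff_sdiff]
    rfl
  have hle (C : Finset (Fin L → ℤ)) : ‖∑ n ∈ C, V n y‖ ≤ C.card * ‖y‖ := by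
    simpa using norm_sum_le_of_le C fun n _ => hV n y
  rw [orbitAverage_apply, norm_smul, norm_inv, Complex.norm_natCast, hsum, hcard,
    div_mul_eq_mul_div, div_eq_inv_mul, add_mul]
  gcongr
  exact (norm_sub_le _ _).trans (add_le_add (hle _) (hle _))

/-- The mean ergodic theorem along Følner sequences: the averages of a vector converge to an
invariant vector which is its orthogonal projection to the space of invariant vectors. -/
theorem exists_tendsto_orbitAverage [CompleteSpace H] (hV : ∀ g x, ‖V g x‖ ≤ ‖x‖)
    (hadd : ∀ g h, V (g + h) = (V g).comp (V h)) (x : H) :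
    ∃ p : H, inner ℂ p x = (‖p‖ ^ 2 : ℝ) ∧ ∀ I, IsFolner L I →
      Tendsto (fun N => orbitAverage V (I N) x) atTop (nhds p) := by
  set W : Submodule ℂ H := ⨅ g, (V g).eqLocus (1 : H →L[ℂ] H)
  have hW {z : H} : z ∈ W ↔ ∀ g, V g z = z := by simp [W]
  have hWc : IsClosed (W : Set H) := by
    have : (W : Set H) = ⋂ g, {z | V g z = z} := by ext z; simp [hW]
    rw [this]
    exact isClosed_iInter fun g => isClosed_eq (V g).continuous continuous_id
  have : CompleteSpace W := hWc.completeSpace_coe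
  set K : Submodule ℂ H := Submodule.span ℂ {z | ∃ g y, z = V g y - y}
  have hK : Wᗮ ≤ K.topologicalClosure := by
    rw [← Submodule.orthogonal_orthogonal_eq_closure]
    refine Submodule.orthogonal_le fun z hz => hW.2 fun g => ?_
    refine eq_of_norm_le_re_inner_eq_norm_sq (𝕜 := ℂ) (hV g z) ?_
    have h0 : inner ℂ (V g z - z) z = 0 :=
      (Submodule.mem_orthogonal _ _).1 hz _ (Submodule.subset_span ⟨g, z, rfl⟩)
    rw [inner_sub_left, sub_eq_zero] at h0
    rw [h0]
    exact inner_self_eq_norm_sq z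
  have hzero (I) (hI : IsFolner L I) (z : H) (hz : z ∈ K.topologicalClosure) :
      Tendsto (fun N => orbitAverage V (I N) z) atTop (nhds 0) := by
    have hspan (z : H) (hz : z ∈ K) :
        Tendsto (fun N => orbitAverage V (I N) z) atTop (nhds 0) := by
      induction hz using Submodule.span_induction with
      | mem z h =>
        obtain ⟨g, y, rfl⟩ := h
        refine squeeze_zero_norm
          (fun N => norm_orbitAverage_coboundary_le hV hadd (I N) g y) ?_
        simpa using (hI.2 g).mul_const ‖y‖
      | zero => simp
      | add a b _ _ ha hb => simpa using ha.add hb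
      | smul c a _ ha => simpa using ha.const_smul c
    rw [Metric.tendsto_atTop]
    intro ε hε
    obtain ⟨w, hw, hzw⟩ := Metric.mem_closure_iff.1 hz (ε / 2) (half_pos hε)
    obtain ⟨N₀, hN₀⟩ := Metric.tendsto_atTop.1 (hspan w hw) (ε / 2) (half_pos hε)
    refine ⟨N₀, fun N hN => ?_⟩
    have h1 := hN₀ N hN
    have h2 := norm_orbitAverage_apply_le hV (I N) (z - w)
    rw [dist_eq_norm] at hzw
    rw [dist_zero_right] at h1 ⊢
    calc ‖orbitAverage V (I N) z‖
        = ‖orbitAverage V (I N) (z - w) + orbitAverage V (I N) w‖ := by simp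
      _ ≤ _ := norm_add_le _ _
      _ < ε := by linarith
  refine ⟨W.starProjection x, ?_, fun I hI => ?_⟩
  · have h : inner ℂ (W.starProjection x) (x - W.starProjection x) = 0 :=
      (Submodule.mem_orthogonal _ _).1 (W.sub_starProjection_mem_orthogonal x) _
        (W.starProjection_apply_mem x)
    rw [inner_sub_right, sub_eq_zero] at h
    rw [h, inner_self_eq_norm_sq_to_K]
    push_cast
    rfl
  · have h := hzero I hI _ (hK (W.sub_starProjection_mem_orthogonal x))
    have hp (N) : orbitAverage V (I N) (W.starProjection x) = W.starProjection x := by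
      have hc : ((I N).card : ℂ) ≠ 0 := by exact_mod_cast (hI.1 N).card_pos.ne'
      rw [orbitAverage_apply,
        Finset.sum_congr rfl fun n _ => hW.1 (W.starProjection_apply_mem x) n]
      simp [← Nat.cast_smul_eq_nsmul ℂ, smul_smul, hc]
    simpa [hp] using h.add_const (W.starProjection x)

/-- The norm of the limit of the averages of `x` along a Følner sequence is controlled by the
averages of the squares of the correlations `⟪V h x, x⟫` along any other one. -/
theorem limsup_norm_orbitAverage_pow_four_le [CompleteSpace H] (hV : ∀ g x, ‖V g x‖ ≤ ‖x‖)
    (hadd : ∀ g h, V (g + h) = (V g).comp (V h)) {x : H} {a : (Fin L → ℤ) → ℝ} {C : ℝ}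
    (ha : ∀ h, ‖inner ℂ (V h x) x‖ ^ 2 ≤ a h) (haC : ∀ h, a h ≤ C)
    {I J : ℕ → Finset (Fin L → ℤ)} (hI : IsFolner L I) (hJ : IsFolner L J) :
    limsup (fun N => ‖orbitAverage V (I N) x‖ ^ 4) atTop ≤
      limsup (fun N => ((J N).card : ℝ)⁻¹ * ∑ h ∈ J N, a h) atTop := by
  obtain ⟨p, hp, hlim⟩ := exists_tendsto_orbitAverage hV hadd x
  have hcorr : Tendsto (fun N => ‖inner ℂ (orbitAverage V (J N) x) x‖ ^ 2) atTop
      (nhds (‖p‖ ^ 4)) := by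
    have h := (((hlim J hJ).inner (𝕜 := ℂ) (tendsto_const_nhds (x := x))).norm).pow 2
    rw [hp, Complex.norm_real, Real.norm_of_nonneg (by positivity), ← pow_mul] at h
    exact h
  rw [((hlim I hI).norm.pow 4).limsup_eq, ← hcorr.limsup_eq]
  have hpos (N) : (0 : ℝ) < (J N).card := by exact_mod_cast (hJ.1 N).card_pos
  refine limsup_le_limsup (Eventually.of_forall fun N => ?_)
    hcorr.isCoboundedUnder_le ⟨C, eventually_map.2 <| Eventually.of_forall fun N => ?_⟩
  · dsimp only
    rw [orbitAverage_apply, inner_smul_left, sum_inner, norm_mul, mul_pow, RCLike.norm_conj,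
      norm_inv, Complex.norm_natCast]
    calc ((J N).card : ℝ)⁻¹ ^ 2 * ‖∑ h ∈ J N, inner ℂ (V h x) x‖ ^ 2
        ≤ ((J N).card : ℝ)⁻¹ ^ 2 * (∑ h ∈ J N, ‖inner ℂ (V h x) x‖) ^ 2 := by
          gcongr
          exact norm_sum_le _ _
      _ ≤ ((J N).card : ℝ)⁻¹ ^ 2 * ((J N).card * ∑ h ∈ J N, ‖inner ℂ (V h x) x‖ ^ 2) := by
          gcongr
          exact sq_sum_le_card_mul_sum_sq
      _ = ((J N).card : ℝ)⁻¹ * ∑ h ∈ J N, ‖inner ℂ (V h x) x‖ ^ 2 := by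
          have := (hpos N).ne'
          field_simp
      _ ≤ _ := by
          gcongr with h _
          exact ha h
  · dsimp only
    rw [inv_mul_le_iff₀ (hpos N), ← nsmul_eq_mul]
    exact Finset.sum_le_card_nsmul _ _ _ fun h _ => haC h

end MeanErgodic

section Box

theorem card_Icc_cube (L N : ℕ) :
    (Finset.Icc (fun _ : Fin L => -(N : ℤ)) (fun _ => (N : ℤ))).card = (2 * N + 1) ^ L := by
  rw [Pi.card_Icc]
  simp only [Int.card_Icc, Finset.prod_const, Finset.card_univ, Fintype.card_fin]
  congr 1
  omega

/-- The cubes `[-N, N]^L` form a Følner sequence. -/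
theorem isFolner_Icc_cube (L : ℕ) :
    IsFolner L fun N => Finset.Icc (fun _ => -(N : ℤ)) (fun _ => (N : ℤ)) := by
  refine ⟨fun N => Finset.nonempty_Icc.2 fun _ => by simp, fun g => ?_⟩
  have hprod : Tendsto (fun N : ℕ => ∏ j, (1 - (|g j| : ℝ) / (2 * N + 1))) atTop (nhds 1) := by
    have h (j : Fin L) : Tendsto (fun N : ℕ => 1 - (|g j| : ℝ) / (2 * N + 1)) atTop (nhds 1) := by
      have h2 : Tendsto (fun N : ℕ => 2 * (N : ℝ) + 1) atTop atTop :=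
        tendsto_atTop_add_const_right _ _
          (tendsto_natCast_atTop_atTop.const_mul_atTop two_pos)
      simpa using (h2.const_div_atTop (|g j| : ℝ)).const_sub 1
    simpa using tendsto_finsetProd Finset.univ fun j _ => h j
  have hlim := (hprod.const_sub 1).const_mul 2
  rw [sub_self, mul_zero] at hlim
  refine squeeze_zero' (Eventually.of_forall fun N => by positivity) ?_ hlim
  have hlarge : ∀ᶠ N : ℕ in atTop, ∀ j, |g j| ≤ N := by
    refine eventually_all.2 fun j => ?_
    filter_upwards [eventually_ge_atTop (g j).natAbs] with N hN
    rw [Int.abs_eq_natAbs]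
    exact_mod_cast hN
  filter_upwards [hlarge] with N hN
  set B : Finset (Fin L → ℤ) := Finset.Icc (fun _ => -(N : ℤ)) (fun _ => (N : ℤ))
  have hBcard : (B.card : ℝ) = ∏ _j : Fin L, (2 * (N : ℝ) + 1) := by
    rw [card_Icc_cube]; simp
  have hBpos : (0 : ℝ) < B.card := by rw [hBcard]; positivity
  have himg : (B.image (g + ·)).card = B.card :=
    Finset.card_image_of_injective _ (add_right_injective g)
  have hinter : ∏ j, (2 * (N : ℝ) + 1 - |g j|) ≤ ((B.image (g + ·) ∩ B).card : ℝ) := by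
    have hsub : Finset.Icc (fun j => max (-(N : ℤ)) (g j - N)) (fun j => min (N : ℤ) (g j + N))
        ⊆ B.image (g + ·) ∩ B := by
      intro y hy
      rw [Finset.mem_Icc, Pi.le_def, Pi.le_def] at hy
      refine Finset.mem_inter.2 ⟨Finset.mem_image.2 ⟨y - g, ?_, by simp⟩, ?_⟩ <;>
      · refine Finset.mem_Icc.2 ⟨fun j => ?_, fun j => ?_⟩ <;>
        · have h1 := hy.1 j
          have h2 := hy.2 j
          simp only [Pi.sub_apply]
          omega
    refine le_trans (le_of_eq ?_) (Nat.cast_le.2 (Finset.card_le_card hsub))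
    rw [Pi.card_Icc, Nat.cast_prod]
    refine Finset.prod_congr rfl fun j _ => ?_
    have h := hN j
    have h2 : ((Finset.Icc (max (-(N : ℤ)) (g j - N)) (min (N : ℤ) (g j + N))).card : ℤ)
        = 2 * N + 1 - |g j| := by
      rw [Int.card_Icc]
      rcases abs_cases (g j) with ⟨h3, h4⟩ | ⟨h3, h4⟩ <;> omega
    exact_mod_cast (congrArg (Int.cast : ℤ → ℝ) h2).symm
  have hsymm : (((B.image (g + ·)) ∆ B).card : ℝ)
      = 2 * (B.card - ((B.image (g + ·) ∩ B).card : ℝ)) := by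
    have h1 := Finset.card_sdiff_add_card_inter (B.image (g + ·)) B
    have h2 := Finset.card_sdiff_add_card_inter B (B.image (g + ·))
    have h3 : ((B.image (g + ·)) ∆ B).card
        = (B.image (g + ·) \ B).card + (B \ B.image (g + ·)).card :=
      Finset.card_union_of_disjoint disjoint_sdiff_sdiff
    rw [Finset.inter_comm] at h2
    rw [himg] at h1
    have h4 : ((B.image (g + ·)) ∆ B).card + 2 * (B.image (g + ·) ∩ B).card = 2 * B.card := by
      omega
    have h5 : ((((B.image (g + ·)) ∆ B).card : ℝ)) + 2 * (B.image (g + ·) ∩ B).card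
        = 2 * B.card := by exact_mod_cast h4
    linarith
  have hfactor : ∏ j, (2 * (N : ℝ) + 1 - |g j|)
      = (∏ j, (1 - (|g j| : ℝ) / (2 * N + 1))) * B.card := by
    rw [hBcard, ← Finset.prod_mul_distrib]
    exact Finset.prod_congr rfl fun j _ => by push_cast; field_simp
  rw [hfactor] at hinter
  rw [div_le_iff₀ hBpos, hsymm]
  linarith

end Box

section Koopman

/-- A complex multiple of the Koopman operator `φ ↦ φ ∘ R` on `L²`. -/
def twistedKoopman {Y : Type*} [MeasurableSpace Y] (ν : Measure Y) {R : Y → Y}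
    (hR : MeasurePreserving R ν ν) (c : ℂ) : Lp ℂ 2 ν →L[ℂ] Lp ℂ 2 ν :=
  c • (Lp.compMeasurePreservingₗᵢ ℂ R hR).toContinuousLinearMap

variable {Y : Type*} [MeasurableSpace Y] {ν : Measure Y}

theorem twistedKoopman_apply {R : Y → Y} (hR : MeasurePreserving R ν ν) (c : ℂ)
    (φ : Lp ℂ 2 ν) : twistedKoopman ν hR c φ = c • Lp.compMeasurePreserving R hR φ := rfl

theorem norm_twistedKoopman_apply {R : Y → Y} (hR : MeasurePreserving R ν ν) {c : ℂ}
    (hc : ‖c‖ = 1) (φ : Lp ℂ 2 ν) : ‖twistedKoopman ν hR c φ‖ = ‖φ‖ := by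
  rw [twistedKoopman_apply, norm_smul, hc, one_mul, Lp.norm_compMeasurePreserving]

theorem twistedKoopman_comp {R R' : Y → Y} (hR : MeasurePreserving R ν ν)
    (hR' : MeasurePreserving R' ν ν) (c c' : ℂ) :
    (twistedKoopman ν hR' c').comp (twistedKoopman ν hR c) =
      twistedKoopman ν (hR.comp hR') (c' * c) := by
  ext1 φ
  have h : Lp.compMeasurePreserving (R ∘ R') (hR.comp hR') φ =
      Lp.compMeasurePreserving R' hR' (Lp.compMeasurePreserving R hR φ) :=
    Lp.compMeasurePreserving_comp_apply φ hR hR'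
  rw [ContinuousLinearMap.comp_apply, twistedKoopman_apply hR, map_smul, twistedKoopman_apply,
    twistedKoopman_apply, h, smul_smul, mul_comm]

theorem norm_orbitAverage_twistedKoopman {G : Type*} {R : G → Y → Y}
    (hR : ∀ g, MeasurePreserving (R g) ν ν) (c : G → ℂ) (A : Finset G) {F : Y → ℂ}
    (hF : MemLp F 2 ν) :
    ‖orbitAverage (fun g => twistedKoopman ν (hR g) (c g)) A (hF.toLp F)‖ =
      (eLpNorm (fun y => (A.card : ℂ)⁻¹ * ∑ n ∈ A, c n * F (R n y)) 2 ν).toReal := by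
  rw [Lp.norm_def, orbitAverage_apply]
  congr 1
  refine eLpNorm_congr_ae ?_
  have h1 (n : G) : (twistedKoopman ν (hR n) (c n) (hF.toLp F) : Y → ℂ) =ᵐ[ν]
      fun y => c n * F (R n y) := by
    rw [twistedKoopman_apply, Lp.toLp_compMeasurePreserving]
    refine (Lp.coeFn_smul _ _).trans ?_
    filter_upwards [(hF.comp_measurePreserving (hR n)).coeFn_toLp] with y hy
    simp [hy]
  have h2 : ((∑ n ∈ A, twistedKoopman ν (hR n) (c n) (hF.toLp F) : Lp ℂ 2 ν) : Y → ℂ) =ᵐ[ν]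
      fun y => ∑ n ∈ A, c n * F (R n y) := by
    classical
    induction A using Finset.induction_on with
    | empty =>
      simp only [Finset.sum_empty]
      exact Lp.coeFn_zero ℂ 2 ν
    | insert a s ha ih =>
      simp only [Finset.sum_insert ha]
      refine (Lp.coeFn_add _ _).trans ?_
      filter_upwards [ih, h1 a] with y hy hy'
      rw [Pi.add_apply, hy, hy']
  refine (Lp.coeFn_smul _ _).trans ?_
  filter_upwards [h2] with y hy
  rw [Pi.smul_apply, hy, smul_eq_mul]

theorem norm_inner_twistedKoopman {R : Y → Y} (hR : MeasurePreserving R ν ν) {c : ℂ}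
    (hc : ‖c‖ = 1) {F : Y → ℂ} (hF : MemLp F 2 ν) :
    ‖inner ℂ (twistedKoopman ν hR c (hF.toLp F)) (hF.toLp F)‖ =
      ‖∫ y, F (R y) * (starRingEnd ℂ) (F y) ∂ν‖ := by
  rw [norm_inner_symm, twistedKoopman_apply, inner_smul_right, norm_mul, hc, one_mul,
    Lp.toLp_compMeasurePreserving, L2.inner_def]
  congr 1
  refine integral_congr_ae ?_
  filter_upwards [hF.coeFn_toLp, (hF.comp_measurePreserving hR).coeFn_toLp] with y h1 h2
  simp [h1, h2, RCLike.inner_apply]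

end Koopman

theorem norm_e2pi (x : ℝ) : ‖e2pi x‖ = 1 := by
  have h : 2 * Real.pi * Complex.I * x = ((2 * Real.pi * x : ℝ) : ℂ) * Complex.I := by
    push_cast; ring
  rw [e2pi, h, Complex.norm_exp_ofReal_mul_I]

theorem e2pi_add (x y : ℝ) : e2pi (x + y) = e2pi x * e2pi y := by
  rw [e2pi, e2pi, e2pi, ← Complex.exp_add]
  push_cast
  ring_nf

section CondExp

variable {X : Type*} {m m₀ : MeasurableSpace X} {μ : Measure X} [IsProbabilityMeasure μ]
  {g : X → ℂ}

theorem integrable_norm_condExp_sq (hm : m ≤ m₀) (hg : ∀ x, ‖g x‖ ≤ 1) :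
    Integrable (fun x => ‖(μ[g | m]) x‖ ^ 2) μ := by
  refine Integrable.of_bound
    ((stronglyMeasurable_condExp.mono hm).norm.pow 2).aestronglyMeasurable 1 ?_
  filter_upwards [ae_bdd_norm_condExp_of_ae_bdd_norm (m := m) (.of_forall hg)] with x hx
  rw [Real.norm_of_nonneg (by positivity)]
  exact pow_le_one₀ (norm_nonneg _) hx

theorem integral_norm_condExp_sq_le_one (hm : m ≤ m₀) (hg : ∀ x, ‖g x‖ ≤ 1) :
    ∫ x, ‖(μ[g | m]) x‖ ^ 2 ∂μ ≤ 1 := by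
  have h := integral_mono_ae (integrable_norm_condExp_sq (μ := μ) hm hg) (integrable_const 1)
    (by
      filter_upwards [ae_bdd_norm_condExp_of_ae_bdd_norm (m := m) (.of_forall hg)] with x hx
      exact pow_le_one₀ (norm_nonneg _) hx)
  simpa using h

theorem norm_integral_sq_le_integral_norm_condExp_sq (hm : m ≤ m₀) (hg : ∀ x, ‖g x‖ ≤ 1) :
    ‖∫ x, g x ∂μ‖ ^ 2 ≤ ∫ x, ‖(μ[g | m]) x‖ ^ 2 ∂μ := by
  rw [← integral_condExp hm]
  calc ‖∫ x, (μ[g | m]) x ∂μ‖ ^ 2 ≤ (∫ x, ‖(μ[g | m]) x‖ ∂μ) ^ 2 := by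
        gcongr
        exact norm_integral_le_integral_norm _
    _ ≤ _ := (even_two.convexOn_pow (𝕜 := ℝ)).map_integral_le (by fun_prop) isClosed_univ
        (by simp) integrable_condExp.norm (integrable_norm_condExp_sq hm hg)

end CondExp

/-- On a product space, the integral of a tensor product of `1`-bounded functions is bounded by
the integral of each factor. -/
theorem norm_integral_prod_le {ι X : Type*} [Fintype ι] [MeasurableSpace X] {μ : Measure X}
    [IsProbabilityMeasure μ] {g : ι → X → ℂ} (hg : ∀ i x, ‖g i x‖ ≤ 1) (i : ι) :
    ‖∫ x : ι → X, ∏ i', g i' (x i') ∂(Measure.pi fun _ => μ)‖ ≤ ‖∫ x, g i x ∂μ‖ := by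
  classical
  rw [integral_fintype_prod_eq_prod, norm_prod, ← Finset.mul_prod_erase _ _ (Finset.mem_univ i)]
  refine mul_le_of_le_one_right (norm_nonneg _)
    (Finset.prod_le_one (fun _ _ => norm_nonneg _) fun j _ => ?_)
  simpa using norm_integral_le_of_norm_le_const (μ := μ) (.of_forall (hg j))

/-- **Lemma.** Bound of a twisted linear average on a product system by the Host–Kra type
quantity of the `i`-th function. The commuting families `T_{i,j}` and their integer
powers are encoded by the commuting `ℤ^L`-actions `S i`, so that `T_i^h = S i h` and
`T_{i,j} = S i (Pi.single j 1)`. -/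
theorem stmt6 {X : Type*} [MeasurableSpace X] (μ : Measure X) [IsProbabilityMeasure μ]
    (k L : ℕ) (hk : 0 < k) (hL : 0 < L)
    (S : Fin k → (Fin L → ℤ) → X → X)
    (hS0 : ∀ i, S i 0 = id)
    (hSadd : ∀ i g h, S i (g + h) = S i g ∘ S i h)
    (hSmp : ∀ i g, MeasurePreserving (S i g) μ μ)
    (hcomm : ∀ i i' g g', S i g ∘ S i' g' = S i' g' ∘ S i g)
    (α : Fin L → ℝ) (β : ℝ)
    (f : Fin k → X → ℂ) (hfm : ∀ i, Measurable (f i)) (hfb : ∀ i x, ‖f i x‖ ≤ 1)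
    (i : Fin k) :
    folnerSup L (fun I =>
        limsup (fun N =>
            (eLpNorm (fun x : Fin k → X =>
                (((I N).card : ℂ))⁻¹ * ∑ n ∈ I N,
                  e2pi ((∑ j, α j * (n j : ℝ)) + β) * ∏ i', f i' (S i' n (x i')))
              2 (Measure.pi fun _ : Fin k => μ)).toReal ^ 4)
          atTop)
      ≤ 16 * limsup (fun N : ℕ =>
          (((2 * (N : ℝ) + 1) ^ L))⁻¹ *
            ∑ h ∈ Finset.Icc (fun _ => -(N : ℤ)) (fun _ => (N : ℤ)),
              ∫ x, ‖(μ[(fun y => f i (S i h y) * (starRingEnd ℂ) (f i y)) |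
                invSigma (fun j : Fin L => S i (Pi.single j 1))]) x‖ ^ 2 ∂μ)
          atTop := by
  set a : (Fin L → ℤ) → ℝ := fun h =>
    ∫ x, ‖(μ[(fun y => f i (S i h y) * (starRingEnd ℂ) (f i y)) |
      invSigma (fun j : Fin L => S i (Pi.single j 1))]) x‖ ^ 2 ∂μ
  have hm : invSigma (fun j : Fin L => S i (Pi.single j 1)) ≤ ‹MeasurableSpace X› :=
    fun _ hA => hA.1
  have hbound (i' : Fin k) (h : Fin L → ℤ) (x : X) :
      ‖f i' (S i' h x) * (starRingEnd ℂ) (f i' x)‖ ≤ 1 := by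
    rw [norm_mul, RCLike.norm_conj]
    exact mul_le_one₀ (hfb _ _) (norm_nonneg _) (hfb _ _)
  have ha0 (h) : 0 ≤ a h := integral_nonneg fun _ => by positivity
  have ha1 (h) : a h ≤ 1 := integral_norm_condExp_sq_le_one hm (hbound i h)
  have hcard (N : ℕ) : ((2 * (N : ℝ) + 1) ^ L)⁻¹ =
      ((Finset.Icc (fun _ : Fin L => -(N : ℤ)) (fun _ => (N : ℤ))).card : ℝ)⁻¹ := by
    rw [card_Icc_cube]; push_cast; rfl
  simp only [hcard]
  have hJ := isFolner_Icc_cube L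
  set J : ℕ → Finset (Fin L → ℤ) := fun N => Finset.Icc (fun _ => -(N : ℤ)) (fun _ => (N : ℤ))
  have hmean (N : ℕ) : ((J N).card : ℝ)⁻¹ * ∑ h ∈ J N, a h ≤ 1 := by
    have hpos : (0 : ℝ) < (J N).card := by exact_mod_cast (hJ.1 N).card_pos
    rw [inv_mul_le_iff₀ hpos, ← nsmul_eq_mul]
    exact Finset.sum_le_card_nsmul _ _ _ fun h _ => ha1 h
  have hnonneg : 0 ≤ limsup (fun N => ((J N).card : ℝ)⁻¹ * ∑ h ∈ J N, a h) atTop := by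
    refine le_limsup_of_frequently_le (Eventually.frequently <| .of_forall fun N => ?_)
      ⟨1, eventually_map.2 <| .of_forall hmean⟩
    exact mul_nonneg (by positivity) (Finset.sum_nonneg fun h _ => ha0 h)
  have hR (n : Fin L → ℤ) : MeasurePreserving (fun (x : Fin k → X) i' => S i' n (x i'))
      (Measure.pi fun _ => μ) (Measure.pi fun _ => μ) :=
    measurePreserving_pi _ _ fun i' => hSmp i' n
  have hF : MemLp (fun x : Fin k → X => ∏ i', f i' (x i')) 2 (Measure.pi fun _ => μ) := by
    refine MemLp.of_bound (Measurable.aestronglyMeasurable ?_) 1 (.of_forall fun x => ?_)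
    · exact Finset.measurable_prod _ fun i' _ => (hfm i').comp (measurable_pi_apply i')
    · rw [norm_prod]
      exact Finset.prod_le_one (fun _ _ => norm_nonneg _) fun i' _ => hfb _ _
  set c : (Fin L → ℤ) → ℂ := fun n => e2pi (∑ j, α j * (n j : ℝ))
  have hc (n) : ‖c n‖ = 1 := norm_e2pi _
  have hcadd (g h) : c (g + h) = c g * c h := by
    simp only [c, ← e2pi_add, ← Finset.sum_add_distrib]
    congr 1
    exact Finset.sum_congr rfl fun j _ => by rw [Pi.add_apply]; push_cast; ring
  refine Real.sSup_le ?_ (by positivity)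
  rintro _ ⟨I, hI, rfl⟩
  have key := limsup_norm_orbitAverage_pow_four_le (a := a) (C := 1)
    (V := fun n => twistedKoopman (Measure.pi fun _ => μ) (hR n) (c n))
    (fun g φ => (norm_twistedKoopman_apply (hR g) (hc g) φ).le)
    (fun g h => by
      rw [twistedKoopman_comp, ← hcadd]
      congr 1
      funext x i'
      rw [add_comm, hSadd]
      rfl)
    (x := hF.toLp _)
    (fun h => by
      rw [norm_inner_twistedKoopman (hR h) (hc h) hF]
      refine le_trans ?_ (norm_integral_sq_le_integral_norm_condExp_sq hm (hbound i h))
      gcongr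
      simp only [map_prod, ← Finset.prod_mul_distrib]
      exact norm_integral_prod_le (fun i' => hbound i' h) i)
    ha1 hI hJ
  have heq (N : ℕ) : (eLpNorm (fun x : Fin k → X =>
        (((I N).card : ℂ))⁻¹ * ∑ n ∈ I N,
          e2pi ((∑ j, α j * (n j : ℝ)) + β) * ∏ i', f i' (S i' n (x i')))
        2 (Measure.pi fun _ : Fin k => μ)).toReal =
      ‖orbitAverage (fun n => twistedKoopman (Measure.pi fun _ => μ) (hR n) (c n)) (I N)
        (hF.toLp _)‖ := by
    rw [norm_orbitAverage_twistedKoopman]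
    congr 1
    refine eLpNorm_congr_norm_ae (.of_forall fun x => ?_)
    simp only [e2pi_add, mul_right_comm _ (e2pi β), ← Finset.sum_mul, norm_mul, norm_e2pi,
      mul_one, c]
  simp only [heq]
  exact key.trans (le_mul_of_one_le_left hnonneg (by norm_num))
end
end

section
/- Let d, k ∈ ℕ, let (X, ℬ, μ, (T_g)_{g∈ℤ^d}) be a ℤ^d-measure-preserving system, let H₁,…,H_k, H be subgroups of ℤ^d, and let f ∈ L^∞(μ). Consider the product ℤ^{2d}-measure-preserving system (X×X, ℬ⊗ℬ, μ×μ, (T_g×T_h)_{(g,h)∈ℤ^{2d}}), and for a subgroup H' ⊆ ℤ^d let H'^{[1]} := {(a,a) : a ∈ H'} ⊆ ℤ^{2d} be its diagonal copy. Then ⦀f⊗conj(f)⦀_{H₁^{[1]},…,H_k^{[1]}} ≤ ⦀f⦀²_{H,H₁,…,H_k}, where the left-hand seminorm is computed in the product system, (f⊗conj(f))(x,y) := f(x)·conj(f(y)), and the seminorms are the iterated upper Host–Kra seminorms defined in the context. -/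
open MeasureTheory Filter Finset
open scoped ENNReal

noncomputable section

/-- The `2^{m+1}`-th power of the iterated (upper) Host–Kra seminorm of `f` with respect
to the `m+1` subgroups `H 0, …, H m` of `G`, computed using the boxes `box N`:
`⦀f⦀²_{H'} = ∫ |E(f|𝓘(H'))|² dμ`, and recursively
`⦀f⦀^{2^m}_{H'₁,…,H'_m} = limsup_N avg_{g ∈ H'_m ∩ box N} ⦀f·conj(f∘T_g)⦀^{2^{m−1}}_{H'₁,…,H'_{m−1}}`. -/
def hkPow {G X : Type*} [AddCommGroup G] [MeasurableSpace X]
    (box : ℕ → Finset G) (μ : Measure X) (T : G → X → X) :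
    (m : ℕ) → (Fin (m + 1) → AddSubgroup G) → (X → ℂ) → ℝ
  | 0, H, f => ∫ x, ‖(μ[f | invSigma (fun a : ↥(H 0) => T ↑a)]) x‖ ^ 2 ∂μ
  | m + 1, H, f =>
      limsup (fun N : ℕ =>
          letI := Classical.decPred fun g : G => g ∈ H (Fin.last (m + 1))
          ((((box N).filter fun g => g ∈ H (Fin.last (m + 1))).card : ℝ))⁻¹ *
            ∑ g ∈ (box N).filter fun g => g ∈ H (Fin.last (m + 1)),
              hkPow box μ T m (fun i => H i.castSucc)
                (fun x => f x * (starRingEnd ℂ) (f (T g x))))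
        atTop

/-- The box `[−N, N]^d` in `ℤ^d`. -/
def boxZ (d : ℕ) (N : ℕ) : Finset (Fin d → ℤ) :=
  Finset.Icc (fun _ => -(N : ℤ)) (fun _ => (N : ℤ))

/-- The diagonal copy `H^{[1]} = {(a,a) : a ∈ H}` of a subgroup of `ℤ^d` inside
`ℤ^d × ℤ^d ≅ ℤ^{2d}`. -/
def diagSG {d : ℕ} (H : AddSubgroup (Fin d → ℤ)) :
    AddSubgroup ((Fin d → ℤ) × (Fin d → ℤ)) :=
  H.map ((AddMonoidHom.id _).prod (AddMonoidHom.id _))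


lemma invSigma_le {ι X : Type*} [m0 : MeasurableSpace X] (T : ι → X → X) : invSigma T ≤ m0 :=
  fun _ hs => hs.1

lemma comp_eq_of_measurable_invSigma {ι X E : Type*} [MeasurableSpace X] [MeasurableSpace E]
    [MeasurableSingletonClass E] {T : ι → X → X} {v : X → E} (hv : Measurable[invSigma T] v)
    (a : ι) : v ∘ T a = v := by
  funext x
  have h := (hv (measurableSet_singleton (v x))).2 a
  have hx : x ∈ T a ⁻¹' (v ⁻¹' {v x}) := by rw [h]; rfl
  exact hx

lemma integral_norm_condExp_sq {X : Type*} {m m0 : MeasurableSpace X} (hm : m ≤ m0)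
    (μ : Measure X) [IsProbabilityMeasure μ] {u : X → ℂ} (hu : MemLp u 2 μ) :
    ∫ x, ‖(μ[u | m]) x‖ ^ 2 ∂μ = ‖condExpL2 ℂ ℝ hm hu.toLp‖ ^ 2 := by
  have h := hu.condExpL2_ae_eq_condExp (𝕜 := ℝ) hm
  rw [← Submodule.norm_coe, ← real_inner_self_eq_norm_sq, L2.inner_def]
  refine integral_congr_ae ?_
  filter_upwards [h] with x hx
  rw [real_inner_self_eq_norm_sq, hx]

lemma norm_toLp_sq {X : Type*} [MeasurableSpace X]
    (μ : Measure X) {u : X → ℂ} (hu : MemLp u 2 μ) :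
    ‖hu.toLp‖ ^ 2 = ∫ x, ‖u x‖ ^ 2 ∂μ := by
  rw [← real_inner_self_eq_norm_sq, L2.inner_def]
  refine integral_congr_ae ?_
  filter_upwards [hu.coeFn_toLp] with x hx
  rw [real_inner_self_eq_norm_sq, hx]

/-- The Koopman isometry of a measure-preserving map on real `L²`. -/
abbrev koopman {X : Type*} [MeasurableSpace X] {μ : Measure X} {T : X → X}
    (hT : MeasurePreserving T μ μ) : Lp ℂ 2 μ →ₗᵢ[ℝ] Lp ℂ 2 μ :=
  Lp.compMeasurePreservingₗᵢ ℝ T hT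

lemma koopman_eq_of_mem_lpMeas {ι X : Type*} [MeasurableSpace X] {μ : Measure X}
    {T : ι → X → X} (hT : ∀ a, MeasurePreserving (T a) μ μ) {v : Lp ℂ 2 μ}
    (hv : v ∈ lpMeas ℂ ℝ (invSigma T) 2 μ) (a : ι) : koopman (hT a) v = v := by
  obtain ⟨w, hw, hvw⟩ := mem_lpMeas_iff_aestronglyMeasurable.1 hv
  refine Lp.ext ?_
  have h1 : (koopman (hT a) v : X → ℂ) =ᵐ[μ] v ∘ T a := Lp.coeFn_compMeasurePreserving v (hT a)
  have h2 : v ∘ T a =ᵐ[μ] w ∘ T a := (hT a).quasiMeasurePreserving.ae_eq_comp hvw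
  rw [comp_eq_of_measurable_invSigma hw.measurable a] at h2
  exact h1.trans (h2.trans hvw.symm)

lemma condExpL2_koopman {ι X : Type*} [MeasurableSpace X] {μ : Measure X}
    {T : ι → X → X} (hT : ∀ a, MeasurePreserving (T a) μ μ) (u : Lp ℂ 2 μ) (a : ι) :
    condExpL2 ℂ ℝ (invSigma_le T) (koopman (hT a) u) = condExpL2 ℂ ℝ (invSigma_le T) u := by
  rw [← sub_eq_zero, ← map_sub]
  set w := condExpL2 ℂ ℝ (invSigma_le T) (koopman (hT a) u - u) with hw
  have h := inner_condExpL2_eq_inner_fun (𝕜 := ℝ) (invSigma_le T) (koopman (hT a) u - u)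
    (w : Lp ℂ 2 μ) (mem_lpMeas_iff_aestronglyMeasurable.1 w.2)
  rw [inner_sub_left] at h
  nth_rw 3 [← koopman_eq_of_mem_lpMeas hT w.2 a] at h
  rw [LinearIsometry.inner_map_map, sub_self, ← hw] at h
  exact Subtype.ext (inner_self_eq_zero.1 h)

lemma mem_lpMeas_of_koopman_eq {Γ X : Type*} [AddGroup Γ] [Countable Γ] [MeasurableSpace X]
    {μ : Measure X} {T : Γ → X → X} (hT0 : T 0 = id) (hTadd : ∀ a b, T (a + b) = T a ∘ T b)
    (hT : ∀ a, MeasurePreserving (T a) μ μ) {v : Lp ℂ 2 μ}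
    (hv : ∀ a, koopman (hT a) v = v) : v ∈ lpMeas ℂ ℝ (invSigma T) 2 μ := by
  classical
  have hvm : Measurable (v : X → ℂ) := (Lp.stronglyMeasurable v).measurable
  have hae : ∀ a, v ∘ T a =ᵐ[μ] v := fun a => by
    have h1 : (koopman (hT a) v : X → ℂ) =ᵐ[μ] v ∘ T a :=
      Lp.coeFn_compMeasurePreserving v (hT a)
    rw [hv a] at h1
    exact h1.symm
  set N : Set X := {x | ∀ a, v (T a x) = v x} with hN
  have hNmeas : MeasurableSet N := by
    have : N = ⋂ a, {x | v (T a x) = v x} := by ext; simp [hN]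
    rw [this]
    exact MeasurableSet.iInter fun a =>
      measurableSet_eq_fun (hvm.comp (hT a).measurable) hvm
  have hNae : ∀ᵐ x ∂μ, x ∈ N := ae_all_iff.2 hae
  have hTT : ∀ a b x, T a (T b x) = T (a + b) x := fun a b x => by rw [hTadd]; rfl
  have hNinv : ∀ a x, T a x ∈ N ↔ x ∈ N := fun a x => by
    constructor
    · intro h b
      have h1 := h (b + -a)
      have h2 := h (-a)
      simp only [hTT, neg_add_cancel, neg_add_cancel_right, hT0, id] at h1 h2
      rw [h1, h2]
    · intro h b
      rw [hTT, h, h]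
  set w : X → ℂ := N.indicator v with hw
  have hwm : Measurable w := hvm.indicator hNmeas
  have hwinv : ∀ a x, w (T a x) = w x := fun a x => by
    by_cases hx : x ∈ N
    · rw [hw, Set.indicator_of_mem hx, Set.indicator_of_mem ((hNinv a x).2 hx), hx a]
    · rw [hw, Set.indicator_of_notMem hx, Set.indicator_of_notMem (mt (hNinv a x).1 hx)]
  have hwm' : Measurable[invSigma T] w := fun s hs =>
    ⟨hwm hs, fun a => by ext x; simp [hwinv]⟩
  refine mem_lpMeas_iff_aestronglyMeasurable.2 ⟨w, hwm'.stronglyMeasurable, ?_⟩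
  filter_upwards [hNae] with x hx
  rw [hw, Set.indicator_of_mem hx]

/-- The closed convex hull of an orbit of a group of isometries contains a fixed vector. -/
lemma exists_fixed_mem_closure_convexHull {Γ V : Type*} [AddGroup Γ] [NormedAddCommGroup V]
    [InnerProductSpace ℝ V] [CompleteSpace V] (U : Γ → V →ₗᵢ[ℝ] V)
    (hU : ∀ a b x, U a (U b x) = U (a + b) x) (u : V) :
    ∃ v ∈ closure (convexHull ℝ (Set.range fun a => U a u)), ∀ a, U a v = v := by
  set K := convexHull ℝ (Set.range fun a => U a u) with hK
  have hKne : (closure K).Nonempty :=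
    ((convexHull_nonempty_iff.2 (Set.range_nonempty _))).closure
  have hconv : Convex ℝ (closure K) := (convex_convexHull ℝ _).closure
  obtain ⟨v, hv, hvmin⟩ := exists_norm_eq_iInf_of_complete_convex hKne
    isClosed_closure.isComplete hconv 0
  have hmin : ∀ w ∈ closure K, ‖v‖ ≤ ‖w‖ := fun w hw => by
    simp only [zero_sub, norm_neg] at hvmin
    rw [hvmin]
    exact ciInf_le ⟨0, by rintro _ ⟨x, rfl⟩; exact norm_nonneg _⟩ (⟨w, hw⟩ : closure K)
  refine ⟨v, hv, fun a => ?_⟩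
  have hmaps : Set.MapsTo (U a) K K := by
    have : U a '' K ⊆ K := by
      have h := (U a).toLinearMap.isLinear.image_convexHull (Set.range fun b => U b u)
      rw [hK]
      refine (h.subset.trans ?_ : _)
      refine convexHull_mono ?_
      rintro _ ⟨_, ⟨b, rfl⟩, rfl⟩
      exact ⟨a + b, (hU a b u).symm⟩
    exact Set.mapsTo_iff_image_subset.2 this
  have hUv : U a v ∈ closure K := map_mem_closure (U a).continuous hv hmaps
  by_contra hne
  have h1 := (norm_midpoint_lt_iff ((U a).norm_map v)).2 hne
  rw [(U a).norm_map] at h1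
  refine absurd (hmin _ ?_) (not_le.2 h1)
  rw [smul_add]
  exact hconv hUv hv (by norm_num) (by norm_num) (by norm_num)

/-- The diagonal action of a linear isometry on a finite `ℓ²` power. -/
def piIsometry {ι V : Type*} [Fintype ι] [NormedAddCommGroup V] [InnerProductSpace ℝ V]
    (U : V →ₗᵢ[ℝ] V) : PiLp 2 (fun _ : ι => V) →ₗᵢ[ℝ] PiLp 2 (fun _ : ι => V) where
  toFun w := WithLp.toLp 2 fun i => U (w i)
  map_add' x y := by ext i; simp
  map_smul' c x := by ext i; simp
  norm_map' x := by simp [PiLp.norm_eq_of_L2]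

lemma koopman_koopman {Γ X : Type*} [AddCommGroup Γ] [MeasurableSpace X] {μ : Measure X}
    {T : Γ → X → X} (hTadd : ∀ a b, T (a + b) = T a ∘ T b)
    (hT : ∀ a, MeasurePreserving (T a) μ μ) (a b : Γ) (x : Lp ℂ 2 μ) :
    koopman (hT a) (koopman (hT b) x) = koopman (hT (a + b)) x := by
  refine Lp.ext ?_
  have h1 : (koopman (hT a) (koopman (hT b) x) : X → ℂ) =ᵐ[μ] (koopman (hT b) x) ∘ T a :=
    Lp.coeFn_compMeasurePreserving _ (hT a)
  have h2 : (koopman (hT b) x : X → ℂ) =ᵐ[μ] x ∘ T b :=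
    Lp.coeFn_compMeasurePreserving _ (hT b)
  have h3 : (koopman (hT (a + b)) x : X → ℂ) =ᵐ[μ] x ∘ T (a + b) :=
    Lp.coeFn_compMeasurePreserving _ (hT (a + b))
  have h4 := (hT a).quasiMeasurePreserving.ae_eq_comp h2
  have h5 : T (a + b) = T b ∘ T a := by rw [add_comm, hTadd]
  refine h1.trans (h4.trans ?_)
  refine .trans ?_ h3.symm
  rw [h5, Function.comp_assoc]

lemma condExpL2_of_mem {X : Type*} {m m0 : MeasurableSpace X} {μ : Measure X} (hm : m ≤ m0)
    {v : Lp ℂ 2 μ} (hv : v ∈ lpMeas ℂ ℝ m 2 μ) : (condExpL2 ℂ ℝ hm v : Lp ℂ 2 μ) = v := by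
  have : Fact (m ≤ m0) := ⟨hm⟩
  rw [condExpL2]
  exact Submodule.starProjection_eq_self_iff.2 hv

/-- A weak form of the mean ergodic theorem, simultaneously for finitely many vectors. -/
lemma le_sum_norm_condExpL2_sq {Γ X ι : Type*} [AddCommGroup Γ] [Countable Γ] [Fintype ι]
    [MeasurableSpace X] {μ : Measure X} {T : Γ → X → X} (hT0 : T 0 = id)
    (hTadd : ∀ a b, T (a + b) = T a ∘ T b) (hT : ∀ a, MeasurePreserving (T a) μ μ)
    (u : ι → Lp ℂ 2 μ) (L : ℝ)
    (hL : ∀ (κ : Type) [Fintype κ] (c : κ → ℝ) (γ : κ → Γ), (∀ k, 0 ≤ c k) → ∑ k, c k = 1 →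
      L ≤ ∑ i, ‖∑ k, c k • koopman (hT (γ k)) (u i)‖ ^ 2) :
    L ≤ ∑ i, ‖condExpL2 ℂ ℝ (invSigma_le T) (u i)‖ ^ 2 := by
  obtain ⟨v, hv, hvfix⟩ := exists_fixed_mem_closure_convexHull
    (fun a => piIsometry (ι := ι) (koopman (hT a))) (fun a b x =>
      PiLp.ext fun i => koopman_koopman hTadd hT a b (x i)) (WithLp.toLp 2 u)
  set S : Set (PiLp 2 (fun _ : ι => Lp ℂ 2 μ)) := {w | (L ≤ ∑ i, ‖w i‖ ^ 2) ∧
    ∀ i, condExpL2 ℂ ℝ (invSigma_le T) (w i) = condExpL2 ℂ ℝ (invSigma_le T) (u i)} with hS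
  have hSclosed : IsClosed S := by
    have hcont : ∀ i, Continuous fun w : PiLp 2 (fun _ : ι => Lp ℂ 2 μ) => w i :=
      fun i => PiLp.continuous_apply 2 _ i
    have h1 : IsClosed {w : PiLp 2 (fun _ : ι => Lp ℂ 2 μ) | L ≤ ∑ i, ‖w i‖ ^ 2} :=
      isClosed_le continuous_const
        (continuous_finsetSum _ fun i _ => (hcont i).norm.pow 2)
    have h2 : IsClosed (⋂ i, {w : PiLp 2 (fun _ : ι => Lp ℂ 2 μ) |
        condExpL2 ℂ ℝ (invSigma_le T) (w i) = condExpL2 ℂ ℝ (invSigma_le T) (u i)}) :=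
      isClosed_iInter fun i => isClosed_eq
        ((condExpL2 ℂ ℝ (invSigma_le T)).continuous.comp (hcont i)) continuous_const
    convert h1.inter h2 using 1
    ext w
    simp [hS]
  have hsub : convexHull ℝ (Set.range fun a =>
      piIsometry (ι := ι) (koopman (hT a)) (WithLp.toLp 2 u)) ⊆ S := by
    intro w hw
    obtain ⟨κ, _, c, z, hc0, hc1, hz, rfl⟩ := mem_convexHull_iff_exists_fintype.1 hw
    choose γ hγ using hz
    have hcomp : ∀ i, (∑ k, c k • z k) i = ∑ k, c k • koopman (hT (γ k)) (u i) := by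
      intro i
      simp [← hγ, piIsometry]
    refine ⟨?_, fun i => ?_⟩
    · simp only [hcomp]
      exact hL κ c γ hc0 hc1
    · rw [hcomp, map_sum]
      simp only [map_smul, condExpL2_koopman, ← Finset.sum_smul, hc1, one_smul]
  have hvS : v ∈ S := closure_minimal hsub hSclosed hv
  have hvi : ∀ i, ‖condExpL2 ℂ ℝ (invSigma_le T) (u i)‖ = ‖v i‖ := by
    intro i
    rw [← hvS.2 i]
    have hmem : v i ∈ lpMeas ℂ ℝ (invSigma T) 2 μ :=
      mem_lpMeas_of_koopman_eq hT0 hTadd hT fun a => by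
        conv_rhs => rw [← hvfix a]
        rfl
    rw [← Submodule.norm_coe, condExpL2_of_mem _ hmem]
  simp only [hvi]
  exact hvS.1

lemma norm_condExpL2_le_of_convex {Γ X κ : Type*} [Fintype κ]
    [MeasurableSpace X] {μ : Measure X} {T : Γ → X → X} (hT : ∀ a, MeasurePreserving (T a) μ μ)
    (u : Lp ℂ 2 μ) {c : κ → ℝ} (hc : ∑ k, c k = 1) (γ : κ → Γ) :
    ‖condExpL2 ℂ ℝ (invSigma_le T) u‖ ≤ ‖∑ k, c k • koopman (hT (γ k)) u‖ := by
  have h := norm_condExpL2_le (𝕜 := ℝ) (invSigma_le T) (∑ k, c k • koopman (hT (γ k)) u)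
  rw [map_sum] at h
  simpa only [map_smul, condExpL2_koopman, ← Finset.sum_smul, hc, one_smul] using h

lemma norm_sum_koopman_toLp_sq {Γ X κ : Type*} [Fintype κ]
    [MeasurableSpace X] {μ : Measure X} {T : Γ → X → X} (hT : ∀ a, MeasurePreserving (T a) μ μ)
    {u : X → ℂ} (hu : MemLp u 2 μ) (c : κ → ℝ) (γ : κ → Γ) :
    ‖∑ k, c k • koopman (hT (γ k)) hu.toLp‖ ^ 2
      = ∫ x, ‖∑ k, (c k : ℂ) * u (T (γ k) x)‖ ^ 2 ∂μ := by
  have hmem : ∀ k, MemLp (u ∘ T (γ k)) 2 μ := fun k => hu.comp_measurePreserving (hT (γ k))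
  have h1 : ∀ k, koopman (hT (γ k)) hu.toLp = (hmem k).toLp :=
    fun k => Lp.toLp_compMeasurePreserving hu (hT (γ k))
  have hsum : MemLp (fun x => ∑ k, c k • (u ∘ T (γ k)) x) 2 μ :=
    memLp_finsetSum _ fun k _ => (hmem k).const_smul (c k)
  have h2 : ∑ k, c k • koopman (hT (γ k)) hu.toLp = hsum.toLp := by
    simp only [h1]
    refine Lp.ext ?_
    refine .trans ?_ hsum.coeFn_toLp.symm
    refine (Lp.coeFn_finsetSum _ _).trans ?_
    have h3 : ∀ᵐ x ∂μ, ∀ k, (c k • (hmem k).toLp : Lp ℂ 2 μ) x = c k • (u ∘ T (γ k)) x := by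
      refine ae_all_iff.2 fun k => ?_
      filter_upwards [Lp.coeFn_smul (c k) (hmem k).toLp, (hmem k).coeFn_toLp] with x hx hx'
      rw [hx, Pi.smul_apply, hx']
    filter_upwards [h3] with x hx
    simp [hx]
  rw [h2, norm_toLp_sq]
  simp

lemma le_sum_integral_norm_condExp_sq {Γ X ι : Type*} [AddCommGroup Γ] [Countable Γ] [Fintype ι]
    [MeasurableSpace X] {μ : Measure X} [IsProbabilityMeasure μ] {T : Γ → X → X} (hT0 : T 0 = id)
    (hTadd : ∀ a b, T (a + b) = T a ∘ T b) (hT : ∀ a, MeasurePreserving (T a) μ μ)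
    {u : ι → X → ℂ} (hu : ∀ i, MemLp (u i) 2 μ) (L : ℝ)
    (hL : ∀ (κ : Type) [Fintype κ] (c : κ → ℝ) (γ : κ → Γ), (∀ k, 0 ≤ c k) → ∑ k, c k = 1 →
      L ≤ ∑ i, ∫ x, ‖∑ k, (c k : ℂ) * u i (T (γ k) x)‖ ^ 2 ∂μ) :
    L ≤ ∑ i, ∫ x, ‖(μ[u i | invSigma T]) x‖ ^ 2 ∂μ := by
  simp only [fun i => integral_norm_condExp_sq (invSigma_le T) μ (hu i)]
  refine le_sum_norm_condExpL2_sq hT0 hTadd hT _ L fun κ _ c γ h0 h1 => ?_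
  simp only [fun i => norm_sum_koopman_toLp_sq hT (hu i) c γ]
  exact hL κ c γ h0 h1

lemma integral_norm_condExp_sq_le {Γ X κ : Type*} [Fintype κ]
    [MeasurableSpace X] {μ : Measure X} [IsProbabilityMeasure μ] {T : Γ → X → X}
    (hT : ∀ a, MeasurePreserving (T a) μ μ) {u : X → ℂ} (hu : MemLp u 2 μ)
    {c : κ → ℝ} (hc : ∑ k, c k = 1) (γ : κ → Γ) :
    ∫ x, ‖(μ[u | invSigma T]) x‖ ^ 2 ∂μ ≤ ∫ x, ‖∑ k, (c k : ℂ) * u (T (γ k) x)‖ ^ 2 ∂μ := by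
  rw [integral_norm_condExp_sq (invSigma_le T) μ hu, ← norm_sum_koopman_toLp_sq hT hu c γ]
  gcongr
  exact norm_condExpL2_le_of_convex hT _ hc γ


/-- Measurable functions that are bounded everywhere. -/
structure BddMeas {X : Type*} [MeasurableSpace X] (f : X → ℂ) : Prop where
  measurable : Measurable f
  bdd : ∃ C, ∀ x, ‖f x‖ ≤ C

namespace BddMeas

variable {X Y : Type*} [MeasurableSpace X] [MeasurableSpace Y] {f g : X → ℂ}

lemma mul (hf : BddMeas f) (hg : BddMeas g) : BddMeas fun x => f x * g x := by
  obtain ⟨C, hC⟩ := hf.bdd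
  obtain ⟨D, hD⟩ := hg.bdd
  refine ⟨hf.measurable.mul hg.measurable, C * D, fun x => ?_⟩
  rw [norm_mul]
  exact mul_le_mul (hC x) (hD x) (norm_nonneg _) ((norm_nonneg _).trans (hC x))

lemma conj (hf : BddMeas f) : BddMeas fun x => (starRingEnd ℂ) (f x) := by
  obtain ⟨C, hC⟩ := hf.bdd
  exact ⟨(Complex.continuous_conj.measurable).comp hf.measurable, C, fun x => by simpa using hC x⟩

lemma comp (hf : BddMeas f) {T : Y → X} (hT : Measurable T) : BddMeas fun y => f (T y) := by
  obtain ⟨C, hC⟩ := hf.bdd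
  exact ⟨hf.measurable.comp hT, C, fun y => hC _⟩

lemma const (c : ℂ) : BddMeas fun _ : X => c := ⟨measurable_const, ‖c‖, fun _ => le_rfl⟩

lemma sum {ι : Type*} (s : Finset ι) {F : ι → X → ℂ} (hF : ∀ i, BddMeas (F i)) :
    BddMeas fun x => ∑ i ∈ s, F i x := by
  choose C hC using fun i => (hF i).bdd
  exact ⟨Finset.measurable_fun_sum _ fun i _ => (hF i).measurable, ∑ i ∈ s, C i, fun x =>
    (norm_sum_le _ _).trans (Finset.sum_le_sum fun i _ => hC i x)⟩

lemma integrable (hf : BddMeas f) (μ : Measure X) [IsFiniteMeasure μ] : Integrable f μ := by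
  obtain ⟨C, hC⟩ := hf.bdd
  exact .of_bound hf.measurable.aestronglyMeasurable C (.of_forall hC)

lemma memLp (hf : BddMeas f) (p : ℝ≥0∞) (μ : Measure X) [IsFiniteMeasure μ] : MemLp f p μ := by
  obtain ⟨C, hC⟩ := hf.bdd
  exact .of_bound hf.measurable.aestronglyMeasurable C (.of_forall hC)

lemma integrable_norm_sq (hf : BddMeas f) (μ : Measure X) [IsFiniteMeasure μ] :
    Integrable (fun x => ‖f x‖ ^ 2) μ :=
  (hf.memLp 2 μ).integrable_norm_pow (by norm_num)

lemma norm_integral_sq_le (hf : BddMeas f) (μ : Measure X) [IsProbabilityMeasure μ] :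
    ‖∫ x, f x ∂μ‖ ^ 2 ≤ ∫ x, ‖f x‖ ^ 2 ∂μ := by
  have h1 : (∫ x, ‖f x‖ ∂μ) ^ 2 ≤ ∫ x, ‖f x‖ ^ 2 ∂μ :=
    (even_two.convexOn_pow (𝕜 := ℝ)).map_integral_le (by fun_prop) isClosed_univ
      (by simp) (hf.integrable μ).norm (hf.integrable_norm_sq μ)
  exact (by gcongr; exact norm_integral_le_integral_norm f : _ ≤ (∫ x, ‖f x‖ ∂μ) ^ 2).trans h1

end BddMeas

/-- Expansion of the square of a weighted sum of products. -/
lemma norm_sum_mul_conj_sq {κ : Type*} [Fintype κ] (c : κ → ℝ) (a b : κ → ℂ) :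
    ((‖∑ k, (c k : ℂ) * (a k * (starRingEnd ℂ) (b k))‖ ^ 2 : ℝ) : ℂ)
      = ∑ k, ∑ l, (c k * c l : ℂ) * ((a k * (starRingEnd ℂ) (a l)) *
          (starRingEnd ℂ) (b k * (starRingEnd ℂ) (b l))) := by
  rw [Complex.ofReal_pow, ← Complex.mul_conj', map_sum, Finset.sum_mul_sum]
  refine Finset.sum_congr rfl fun k _ => Finset.sum_congr rfl fun l _ => ?_
  simp only [map_mul, Complex.conj_ofReal, Complex.conj_conj]
  ring

lemma sum_norm_sum_mul_conj_sq {κ ι : Type*} [Fintype κ] [Fintype ι] (c : κ → ℝ)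
    (p : κ → ι → ℂ) :
    ∑ q : ι × ι, ‖∑ k, (c k : ℂ) * (p k q.1 * (starRingEnd ℂ) (p k q.2))‖ ^ 2
      = ∑ k, ∑ l, c k * c l * ‖∑ i, p k i * (starRingEnd ℂ) (p l i)‖ ^ 2 := by
  apply Complex.ofReal_injective
  push_cast
  simp only [← Complex.ofReal_pow, norm_sum_mul_conj_sq]
  rw [Finset.sum_comm]
  refine Finset.sum_congr rfl fun k _ => ?_
  rw [Finset.sum_comm]
  refine Finset.sum_congr rfl fun l _ => ?_
  rw [← Finset.mul_sum, Complex.ofReal_pow, ← Complex.mul_conj', map_sum, Finset.sum_mul_sum,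
    Fintype.sum_prod_type]

lemma integral_prod_norm_sum_sq {X κ : Type*} [MeasurableSpace X] [Fintype κ] (μ : Measure X)
    [IsProbabilityMeasure μ] (c : κ → ℝ) {p : κ → X → ℂ} (hp : ∀ k, BddMeas (p k)) :
    ∫ z, ‖∑ k, (c k : ℂ) * (p k z.1 * (starRingEnd ℂ) (p k z.2))‖ ^ 2 ∂(μ.prod μ)
      = ∑ k, ∑ l, c k * c l * ‖∫ x, p k x * (starRingEnd ℂ) (p l x) ∂μ‖ ^ 2 := by
  apply Complex.ofReal_injective
  rw [← integral_complex_ofReal]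
  simp only [norm_sum_mul_conj_sq]
  have hb : ∀ k l, BddMeas fun z : X × X => (c k * c l : ℂ) *
      ((p k z.1 * (starRingEnd ℂ) (p l z.1)) *
        (starRingEnd ℂ) (p k z.2 * (starRingEnd ℂ) (p l z.2))) := fun k l =>
    (BddMeas.const _).mul ((((hp k).mul (hp l).conj).comp measurable_fst).mul
      (((hp k).mul (hp l).conj).comp measurable_snd).conj)
  rw [integral_finsetSum _ fun k _ =>
    integrable_finsetSum _ fun l _ => (hb k l).integrable _]
  push_cast
  refine Finset.sum_congr rfl fun k _ => ?_
  rw [integral_finsetSum _ fun l _ => (hb k l).integrable _]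
  refine Finset.sum_congr rfl fun l _ => ?_
  rw [integral_const_mul, integral_prod_mul (fun x => p k x * (starRingEnd ℂ) (p l x))
    (fun x => (starRingEnd ℂ) (p k x * (starRingEnd ℂ) (p l x))), integral_conj,
    Complex.mul_conj']

lemma sq_card_mul_integral_condExp_le {X ι : Type*} [MeasurableSpace X] {μ : Measure X}
    [IsProbabilityMeasure μ] [Fintype ι] {d : ℕ} {T : (Fin d → ℤ) → X → X}
    (hT0 : T 0 = id) (hTadd : ∀ g h, T (g + h) = T g ∘ T h)
    (hT : ∀ g, MeasurePreserving (T g) μ μ) (H : AddSubgroup (Fin d → ℤ))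
    {f : X → ℂ} (hf : BddMeas f) (x : ι → Fin d → ℤ) :
    (Fintype.card ι : ℝ) ^ 2 *
        ∫ z, ‖((μ.prod μ)[fun z => f z.1 * (starRingEnd ℂ) (f z.2) |
          invSigma (fun (a : ↥(diagSG H)) (z : X × X) =>
            (T a.1.1 z.1, T a.1.2 z.2))]) z‖ ^ 2 ∂(μ.prod μ)
      ≤ ∑ q : ι × ι, ∫ y, ‖(μ[fun y => f y * (starRingEnd ℂ) (f (T (x q.2 - x q.1) y)) |
          invSigma (fun a : ↥H => T a)]) y‖ ^ 2 ∂μ := by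
  have hTT : ∀ a b y, T a (T b y) = T (a + b) y := fun a b y => by rw [hTadd]; rfl
  have hfT : ∀ g, BddMeas fun y => f (T g y) := fun g => hf.comp (hT g).measurable
  refine le_sum_integral_norm_condExp_sq (T := fun a : ↥H => T a) (by simpa using hT0)
    (fun a b => by simpa using hTadd a b) (fun a => hT a)
    (fun q => (hf.mul (hfT _).conj).memLp 2 μ) _ fun κ _ c γ hc0 hc1 => ?_
  have hprod : ∫ z, ‖((μ.prod μ)[fun z => f z.1 * (starRingEnd ℂ) (f z.2) |
          invSigma (fun (a : ↥(diagSG H)) (z : X × X) =>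
            (T a.1.1 z.1, T a.1.2 z.2))]) z‖ ^ 2 ∂(μ.prod μ)
      ≤ ∑ k, ∑ l, c k * c l *
        ‖∫ y, f (T (γ k) y) * (starRingEnd ℂ) (f (T (γ l) y)) ∂μ‖ ^ 2 := by
    rw [← integral_prod_norm_sum_sq μ c fun k => hfT (γ k)]
    exact integral_norm_condExp_sq_le
      (T := fun (a : ↥(diagSG H)) (z : X × X) => (T a.1.1 z.1, T a.1.2 z.2))
      (fun a => (hT _).prod (hT _))
      (((hf.comp measurable_fst).mul (hf.comp measurable_snd).conj).memLp 2 _) hc1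
      (fun k => ⟨((γ k : Fin d → ℤ), (γ k : Fin d → ℤ)), ⟨γ k, (γ k).2, rfl⟩⟩)
  refine (mul_le_mul_of_nonneg_left hprod (by positivity)).trans ?_
  have hshift : ∀ q : ι × ι,
      ∫ y, ‖∑ k, (c k : ℂ) * (f (T (γ k) y) *
        (starRingEnd ℂ) (f (T (x q.2 - x q.1) (T (γ k) y))))‖ ^ 2 ∂μ
      = ∫ y, ‖∑ k, (c k : ℂ) * (f (T (γ k + x q.1) y) *
        (starRingEnd ℂ) (f (T (γ k + x q.2) y)))‖ ^ 2 ∂μ := by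
    intro q
    have hm : Measurable fun y => ‖∑ k, (c k : ℂ) * (f (T (γ k) y) *
        (starRingEnd ℂ) (f (T (x q.2 - x q.1) (T (γ k) y))))‖ ^ 2 :=
      (BddMeas.sum _ fun k => (BddMeas.const _).mul ((hfT _).mul
        ((hfT (x q.2 - x q.1)).comp (hT _).measurable).conj)).measurable.norm.pow_const 2
    conv_lhs => rw [← (hT (x q.1)).map_eq]
    rw [integral_map (hT _).measurable.aemeasurable hm.aestronglyMeasurable]
    simp only [hTT]
    have : ∀ k, x q.2 - x q.1 + ((γ k : Fin d → ℤ) + x q.1) = γ k + x q.2 := fun k => by abel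
    simp only [this]
  have hbi : ∀ k l, BddMeas fun y => ∑ i, f (T (γ k + x i) y) *
      (starRingEnd ℂ) (f (T (γ l + x i) y)) := fun k l =>
    BddMeas.sum _ fun i => (hfT _).mul (hfT _).conj
  calc _ = ∑ k, ∑ l, c k * c l * ‖∫ y, ∑ i, f (T (γ k + x i) y) *
        (starRingEnd ℂ) (f (T (γ l + x i) y)) ∂μ‖ ^ 2 := by
        simp only [Finset.mul_sum]
        refine Finset.sum_congr rfl fun k _ => Finset.sum_congr rfl fun l _ => ?_
        rw [integral_finsetSum _ fun i _ => ((hfT _).mul (hfT _).conj).integrable μ]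
        have : ∀ i, ∫ y, f (T (γ k + x i) y) * (starRingEnd ℂ) (f (T (γ l + x i) y)) ∂μ
            = ∫ y, f (T (γ k) y) * (starRingEnd ℂ) (f (T (γ l) y)) ∂μ := by
          intro i
          conv_rhs => rw [← (hT (x i)).map_eq]
          rw [integral_map (hT _).measurable.aemeasurable
            ((hfT _).mul (hfT _).conj).measurable.aestronglyMeasurable]
          simp only [hTT]
        simp only [this, Finset.sum_const, Finset.card_univ, nsmul_eq_mul, norm_mul,
          RCLike.norm_natCast, mul_pow]
        ring
    _ ≤ ∑ k, ∑ l, c k * c l * ∫ y, ‖∑ i, f (T (γ k + x i) y) *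
        (starRingEnd ℂ) (f (T (γ l + x i) y))‖ ^ 2 ∂μ := by
        gcongr with k _ l _
        · exact mul_nonneg (hc0 k) (hc0 l)
        · exact (hbi k l).norm_integral_sq_le μ
    _ = ∫ y, ∑ k, ∑ l, c k * c l * ‖∑ i, f (T (γ k + x i) y) *
        (starRingEnd ℂ) (f (T (γ l + x i) y))‖ ^ 2 ∂μ := by
        have hkl : ∀ k l, Integrable (fun y => c k * c l * ‖∑ i, f (T (γ k + x i) y) *
          (starRingEnd ℂ) (f (T (γ l + x i) y))‖ ^ 2) μ :=
          fun k l => ((hbi k l).integrable_norm_sq μ).const_mul _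
        rw [integral_finsetSum _ fun k _ => integrable_finsetSum _ fun l _ => hkl k l]
        refine Finset.sum_congr rfl fun k _ => ?_
        rw [integral_finsetSum _ fun l _ => hkl k l]
        simp only [integral_const_mul]
    _ = ∫ y, ∑ q : ι × ι, ‖∑ k, (c k : ℂ) * (f (T (γ k + x q.1) y) *
        (starRingEnd ℂ) (f (T (γ k + x q.2) y)))‖ ^ 2 ∂μ := by
        simp only [fun y => sum_norm_sum_mul_conj_sq c fun k i => f (T (γ k + x i) y)]
    _ = _ := by
        rw [integral_finsetSum _ fun q _ => (BddMeas.sum _ fun k =>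
          (BddMeas.const _).mul ((hfT _).mul (hfT _).conj)).integrable_norm_sq μ]
        exact Finset.sum_congr rfl fun q _ => (hshift q).symm


/-- The average of a real function over a finite set. -/
def avgOn {G : Type*} (S : Finset G) (a : G → ℝ) : ℝ := (S.card : ℝ)⁻¹ * ∑ g ∈ S, a g

/-- The part of the `N`-th box lying in a subgroup. -/
def sgBox {G : Type*} [AddCommGroup G] (box : ℕ → Finset G) (K : AddSubgroup G) (N : ℕ) :
    Finset G :=
  letI := Classical.decPred fun g : G => g ∈ K
  (box N).filter fun g => g ∈ K

lemma mem_sgBox {G : Type*} [AddCommGroup G] {box : ℕ → Finset G} {K : AddSubgroup G} {N : ℕ}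
    {g : G} : g ∈ sgBox box K N ↔ g ∈ box N ∧ g ∈ K := by
  simp [sgBox]

lemma hkPow_succ {G X : Type*} [AddCommGroup G] [MeasurableSpace X]
    (box : ℕ → Finset G) (μ : Measure X) (T : G → X → X) (m : ℕ)
    (H : Fin (m + 2) → AddSubgroup G) (f : X → ℂ) :
    hkPow box μ T (m + 1) H f = limsup (fun N : ℕ => avgOn (sgBox box (H (Fin.last (m + 1))) N)
      fun g => hkPow box μ T m (fun i => H i.castSucc)
        (fun x => f x * (starRingEnd ℂ) (f (T g x)))) atTop := rfl

lemma avgOn_mono {G : Type*} {S : Finset G} {a b : G → ℝ} (h : ∀ g, a g ≤ b g) :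
    avgOn S a ≤ avgOn S b := by
  unfold avgOn
  gcongr
  exact h _

lemma avgOn_mem_Icc {G : Type*} [Nonempty G] (S : Finset G) {a : G → ℝ} {D : ℝ}
    (ha : ∀ g, a g ∈ Set.Icc 0 D) : avgOn S a ∈ Set.Icc 0 D := by
  unfold avgOn
  refine ⟨mul_nonneg (by positivity) (Finset.sum_nonneg fun g _ => (ha g).1), ?_⟩
  rcases S.eq_empty_or_nonempty with rfl | hS
  · obtain ⟨g⟩ := ‹Nonempty G›
    simpa using (ha g).1.trans (ha g).2
  · have hc : (0 : ℝ) < S.card := by exact_mod_cast hS.card_pos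
    rw [inv_mul_le_iff₀ hc, ← nsmul_eq_mul]
    exact Finset.sum_le_card_nsmul _ _ _ fun g _ => (ha g).2

lemma limsup_mem_Icc {u : ℕ → ℝ} {D : ℝ} (hu : ∀ N, u N ∈ Set.Icc 0 D) :
    limsup u atTop ∈ Set.Icc 0 D :=
  ⟨le_limsup_of_frequently_le (.of_forall fun N => (hu N).1)
      (isBoundedUnder_of ⟨D, fun N => (hu N).2⟩),
    limsup_le_of_le (isCoboundedUnder_le_of_le _ fun N => (hu N).1) (.of_forall fun N => (hu N).2)⟩

lemma exists_hkPow_mem_Icc {G X : Type*} [AddCommGroup G] [MeasurableSpace X]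
    (box : ℕ → Finset G) (μ : Measure X) [IsProbabilityMeasure μ] {T : G → X → X}
    (hT : ∀ g, Measurable (T g)) (m : ℕ) (C : ℝ) :
    ∃ D, ∀ (H : Fin (m + 1) → AddSubgroup G) (f : X → ℂ), Measurable f → (∀ x, ‖f x‖ ≤ C) →
      hkPow box μ T m H f ∈ Set.Icc 0 D := by
  induction m generalizing C with
  | zero =>
    refine ⟨C ^ 2, fun H f hf hC => ⟨integral_nonneg fun x => by positivity, ?_⟩⟩
    have hb : BddMeas f := ⟨hf, C, hC⟩
    have hm := hb.memLp 2 μ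
    calc hkPow box μ T 0 H f = ‖condExpL2 ℂ ℝ (invSigma_le _) hm.toLp‖ ^ 2 :=
          integral_norm_condExp_sq (invSigma_le fun a : ↥(H 0) => T a) μ hm
      _ ≤ ‖hm.toLp‖ ^ 2 := by
          gcongr
          exact norm_condExpL2_le (𝕜 := ℝ) (invSigma_le fun a : ↥(H 0) => T a) hm.toLp
      _ = ∫ x, ‖f x‖ ^ 2 ∂μ := norm_toLp_sq μ hm
      _ ≤ ∫ _, C ^ 2 ∂μ := by
          refine integral_mono (hb.integrable_norm_sq μ) (integrable_const _) fun x => ?_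
          exact pow_le_pow_left₀ (norm_nonneg _) (hC x) 2
      _ = C ^ 2 := by simp
  | succ m ih =>
    obtain ⟨D, hD⟩ := ih (C * C)
    refine ⟨D, fun H f hf hC => ?_⟩
    rw [hkPow_succ]
    refine limsup_mem_Icc fun N => avgOn_mem_Icc _ fun g => hD _ _ ?_ fun x => ?_
    · exact hf.mul (Complex.continuous_conj.measurable.comp (hf.comp (hT g)))
    · rw [norm_mul, RCLike.norm_conj]
      exact mul_le_mul (hC x) (hC _) (norm_nonneg _) ((norm_nonneg _).trans (hC x))

lemma mul_limsup_le_sum_limsup {ι : Type*} [Fintype ι] {u : ℕ → ℝ} {v : ι → ℕ → ℝ} {c : ℝ}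
    (hc : 0 < c) (hu : ∀ N, 0 ≤ u N) (hv : ∀ i, ∃ D, ∀ N, v i N ≤ D)
    (h : ∀ N, c * u N ≤ ∑ i, v i N) :
    c * limsup u atTop ≤ ∑ i, limsup (v i) atTop := by
  refine le_of_forall_pos_le_add fun ε hε => ?_
  set η := ε / (Fintype.card ι + 1) with hη
  have hη0 : 0 < η := by positivity
  have hev : ∀ᶠ N in atTop, ∀ i, v i N < limsup (v i) atTop + η :=
    eventually_all.2 fun i => eventually_lt_of_limsup_lt (lt_add_of_pos_right _ hη0)
      (by obtain ⟨D, hD⟩ := hv i; exact isBoundedUnder_of ⟨D, hD⟩)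
  rw [← le_div_iff₀' hc]
  refine limsup_le_of_le (isCoboundedUnder_le_of_le _ hu) ?_
  filter_upwards [hev] with N hN
  rw [le_div_iff₀' hc]
  calc c * u N ≤ ∑ i, v i N := h N
    _ ≤ ∑ i, (limsup (v i) atTop + η) := Finset.sum_le_sum fun i _ => (hN i).le
    _ = ∑ i, limsup (v i) atTop + Fintype.card ι * η := by
        simp [Finset.sum_add_distrib]
    _ ≤ _ := by
        gcongr
        rw [hη, mul_div_assoc', div_le_iff₀ (by positivity)]
        nlinarith

lemma avgOn_sgBox_diagSG {d : ℕ} (K : AddSubgroup (Fin d → ℤ)) (N : ℕ)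
    (a : (Fin d → ℤ) × (Fin d → ℤ) → ℝ) :
    avgOn (sgBox (fun N => boxZ d N ×ˢ boxZ d N) (diagSG K) N) a
      = avgOn (sgBox (boxZ d) K N) fun g => a (g, g) := by
  have h : sgBox (fun N => boxZ d N ×ˢ boxZ d N) (diagSG K) N
      = (sgBox (boxZ d) K N).map ⟨fun g => (g, g), fun g h hgh => (Prod.ext_iff.1 hgh).1⟩ := by
    ext ⟨g, h⟩
    simp only [mem_sgBox, Finset.mem_product, diagSG, AddSubgroup.mem_map, Finset.mem_map]
    constructor
    · rintro ⟨⟨h1, h2⟩, x, hx, hxe⟩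
      obtain rfl : x = g := congrArg Prod.fst hxe
      exact ⟨x, ⟨h1, hx⟩, hxe⟩
    · rintro ⟨x, ⟨h1, hx⟩, hxe⟩
      obtain rfl : x = g := congrArg Prod.fst hxe
      obtain rfl : x = h := congrArg Prod.snd hxe
      exact ⟨⟨h1, h1⟩, x, hx, rfl⟩
  rw [avgOn, avgOn, h, Finset.card_map, Finset.sum_map]
  rfl

lemma avgOn_const_mul {G : Type*} (S : Finset G) (c : ℝ) (a : G → ℝ) :
    c * avgOn S a = avgOn S fun g => c * a g := by
  rw [avgOn, avgOn, ← Finset.mul_sum]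
  ring

lemma avgOn_sum {G ι : Type*} (S : Finset G) (s : Finset ι) (a : ι → G → ℝ) :
    ∑ i ∈ s, avgOn S (a i) = avgOn S fun g => ∑ i ∈ s, a i g := by
  simp only [avgOn]
  rw [← Finset.mul_sum, Finset.sum_comm]

lemma sq_card_mul_hkPow_le {X ι : Type*} [MeasurableSpace X] {μ : Measure X}
    [IsProbabilityMeasure μ] [Fintype ι] {d : ℕ} {T : (Fin d → ℤ) → X → X}
    (hT0 : T 0 = id) (hTadd : ∀ g h, T (g + h) = T g ∘ T h)
    (hT : ∀ g, MeasurePreserving (T g) μ μ) (x : ι → Fin d → ℤ) (m : ℕ)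
    (H : Fin (m + 1) → AddSubgroup (Fin d → ℤ)) {f : X → ℂ} (hf : BddMeas f) :
    (Fintype.card ι : ℝ) ^ 2 *
        hkPow (fun N => boxZ d N ×ˢ boxZ d N) (μ.prod μ)
          (fun g xy => (T g.1 xy.1, T g.2 xy.2)) m (fun i => diagSG (H i))
          (fun xy => f xy.1 * (starRingEnd ℂ) (f xy.2))
      ≤ ∑ q : ι × ι, hkPow (boxZ d) μ T m H
          (fun y => f y * (starRingEnd ℂ) (f (T (x q.2 - x q.1) y))) := by
  have hfT : ∀ {f : X → ℂ} (_ : BddMeas f) g, BddMeas fun y => f (T g y) :=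
    fun hf g => hf.comp (hT g).measurable
  induction m generalizing f with
  | zero => exact sq_card_mul_integral_condExp_le hT0 hTadd hT (H 0) hf x
  | succ m ih =>
    rcases isEmpty_or_nonempty ι with hι | hι
    · simp
    have hbox : ∀ (g : (Fin d → ℤ) × (Fin d → ℤ)),
        Measurable fun xy : X × X => (T g.1 xy.1, T g.2 xy.2) := fun g =>
      ((hT g.1).prod (hT g.2)).measurable
    simp only [hkPow_succ, avgOn_sgBox_diagSG]
    refine mul_limsup_le_sum_limsup (by positivity) (fun N => ?_) (fun q => ?_) fun N => ?_
    · refine mul_nonneg (by positivity) (Finset.sum_nonneg fun g _ => ?_)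
      have hF : BddMeas fun xy : X × X => f xy.1 * (starRingEnd ℂ) (f xy.2) :=
        (hf.comp measurable_fst).mul (hf.comp measurable_snd).conj
      have hFg := hF.mul (hF.comp (hbox (g, g))).conj
      obtain ⟨C, hC⟩ := hFg.bdd
      obtain ⟨D, hD⟩ := exists_hkPow_mem_Icc (fun N => boxZ d N ×ˢ boxZ d N) (μ.prod μ) hbox m C
      exact (hD _ _ hFg.measurable hC).1
    · have hF := hf.mul (hfT hf (x q.2 - x q.1)).conj
      obtain ⟨C, hC⟩ := hF.bdd
      obtain ⟨D, hD⟩ := exists_hkPow_mem_Icc (boxZ d) μ (fun g => (hT g).measurable) m (C * C)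
      refine ⟨D, fun N => (avgOn_mem_Icc _ fun g => hD _ _
        (hF.mul (hfT hF g).conj).measurable fun y => ?_).2⟩
      rw [norm_mul, RCLike.norm_conj]
      exact mul_le_mul (hC _) (hC _) (norm_nonneg _) ((norm_nonneg _).trans (hC y))
    · rw [avgOn_const_mul, avgOn_sum]
      refine avgOn_mono fun g => ?_
      refine le_trans (le_of_eq ?_) ((ih (fun i => H i.castSucc)
        (hf.mul (hfT hf g).conj)).trans_eq ?_)
      · congr 2
        funext xy
        simp only [map_mul, Complex.conj_conj]
        ring
      · refine Finset.sum_congr rfl fun q _ => ?_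
        congr 1
        funext y
        have : T (x q.2 - x q.1) (T g y) = T g (T (x q.2 - x q.1) y) := by
          rw [← Function.comp_apply (f := T g), ← hTadd, add_comm, hTadd]
          rfl
        simp only [map_mul, Complex.conj_conj, this]
        ring


lemma mem_boxZ {d N : ℕ} {g : Fin d → ℤ} : g ∈ boxZ d N ↔ ∀ i, |g i| ≤ N := by
  simp only [boxZ, Finset.mem_Icc, Pi.le_def, ← forall_and, abs_le]

lemma card_boxZ (d N : ℕ) : (boxZ d N).card = (2 * N + 1) ^ d := by
  rw [boxZ, Pi.card_Icc]
  simp only [Int.card_Icc, Finset.prod_const, Finset.card_univ, Fintype.card_fin]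
  congr 1
  omega

lemma sub_mem_sgBox {d N c : ℕ} {K : AddSubgroup (Fin d → ℤ)} {g h : Fin d → ℤ}
    (hg : g ∈ sgBox (boxZ d) K N) (hh : h ∈ sgBox (boxZ d) K c) :
    g - h ∈ sgBox (boxZ d) K (N + c) := by
  rw [mem_sgBox, mem_boxZ] at *
  refine ⟨fun i => ?_, K.sub_mem hg.2 hh.2⟩
  push_cast
  exact (abs_sub _ _).trans (add_le_add (hg.1 i) (hh.1 i))

lemma sgBox_nonempty {d : ℕ} (K : AddSubgroup (Fin d → ℤ)) (N : ℕ) :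
    (sgBox (boxZ d) K N).Nonempty :=
  ⟨0, mem_sgBox.2 ⟨mem_boxZ.2 fun _ => by simp, K.zero_mem⟩⟩

/-- Polynomial growth: enlarging the box by a constant changes the size of its intersection with
a subgroup by a factor close to `1`, for arbitrarily large boxes. -/
lemma exists_card_sgBox_add_le {d : ℕ} (K : AddSubgroup (Fin d → ℤ)) (c N₀ : ℕ) {r : ℝ}
    (hr : 1 < r) : ∃ N ≥ N₀,
      ((sgBox (boxZ d) K (N + c)).card : ℝ) ≤ r * (sgBox (boxZ d) K N).card := by
  by_contra! h
  have hgrow : ∀ k : ℕ, r ^ k ≤ (sgBox (boxZ d) K (N₀ + k * c)).card := by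
    intro k
    induction k with
    | zero => simpa using (sgBox_nonempty K N₀).card_pos
    | succ k ih =>
      have h1 := h (N₀ + k * c) (Nat.le_add_right _ _)
      rw [pow_succ', Nat.succ_mul, ← add_assoc]
      exact (mul_le_mul_of_nonneg_left ih (by positivity)).trans h1.le
  have hle : ∀ N, (sgBox (boxZ d) K N).card ≤ (2 * N + 1) ^ d := fun N => by
    rw [← card_boxZ]
    exact Finset.card_le_card fun g hg => (mem_sgBox.1 hg).1
  set A : ℕ := 2 * N₀ + 2 * c + 1 with hA
  have hA0 : (0 : ℝ) < A := by positivity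
  have hbound : ∀ k : ℕ, r ^ k ≤ ((A : ℝ) ^ d) * ((k + 1 : ℕ) : ℝ) ^ d := fun k => by
    rw [← mul_pow]
    refine (hgrow k).trans ?_
    have h2 : 2 * (N₀ + k * c) + 1 ≤ A * (k + 1) := by rw [hA]; nlinarith
    exact_mod_cast (hle _).trans (Nat.pow_le_pow_left h2 d)
  have hlim := (tendsto_pow_const_div_const_pow_of_one_lt d hr).comp (tendsto_add_atTop_nat 1)
  obtain ⟨k, hk⟩ := (hlim.eventually_lt_const
    (show (0 : ℝ) < ((A : ℝ) ^ d * r)⁻¹ by positivity)).exists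
  simp only [Function.comp_apply] at hk
  have hrk : (0 : ℝ) < r ^ (k + 1) := by positivity
  rw [div_lt_iff₀ hrk, inv_mul_eq_div, lt_div_iff₀ (by positivity), pow_succ] at hk
  nlinarith [hbound k]

lemma exists_sum_translates_le {d n : ℕ} {K : AddSubgroup (Fin d → ℤ)} {a : (Fin d → ℤ) → ℝ}
    (ha : ∀ g, 0 ≤ a g) {M r : ℝ} (hM : 0 ≤ M) (hr : 1 < r)
    (hlim : ∀ᶠ N in atTop, avgOn (sgBox (boxZ d) K N) a ≤ M)
    (x : Fin n → Fin d → ℤ) (hx : ∀ i, x i ∈ K) :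
    ∃ y ∈ K, ∑ i, (a (y - x i) + a (x i - y)) ≤ 2 * n * (r * M) := by
  obtain ⟨c, hc⟩ : ∃ c : ℕ, ∀ i, x i ∈ sgBox (boxZ d) K c := by
    refine ⟨∑ i, ∑ j, (x i j).natAbs, fun i => mem_sgBox.2 ⟨mem_boxZ.2 fun j => ?_, hx i⟩⟩
    rw [Int.abs_eq_natAbs]
    refine Int.ofNat_le.2 ?_
    exact (Finset.single_le_sum (f := fun j => (x i j).natAbs) (fun _ _ => Nat.zero_le _)
      (Finset.mem_univ j)).trans (Finset.single_le_sum
        (f := fun i => ∑ j, (x i j).natAbs) (fun _ _ => Nat.zero_le _) (Finset.mem_univ i))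
  obtain ⟨N₀, hN₀⟩ := eventually_atTop.1 hlim
  obtain ⟨N, hN, hcard⟩ := exists_card_sgBox_add_le K c N₀ hr
  set S := sgBox (boxZ d) K N with hS
  set S' := sgBox (boxZ d) K (N + c) with hS'
  have hS'0 : (0 : ℝ) < S'.card := by exact_mod_cast (sgBox_nonempty K _).card_pos
  have hbig : ∑ z ∈ S', a z ≤ r * S.card * M := by
    have h1 := hN₀ (N + c) (by omega)
    rw [← hS', avgOn, inv_mul_le_iff₀ hS'0] at h1
    exact h1.trans (mul_le_mul_of_nonneg_right hcard hM)
  have hinj : ∀ φ : (Fin d → ℤ) → (Fin d → ℤ), Function.Injective φ → (∀ y ∈ S, φ y ∈ S') →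
      ∑ y ∈ S, a (φ y) ≤ r * S.card * M := by
    intro φ hφ hmaps
    classical
    rw [← Finset.sum_image (f := a) (fun y _ z _ h => hφ h)]
    exact (Finset.sum_le_sum_of_subset_of_nonneg (Finset.image_subset_iff.2 hmaps)
      fun g _ _ => ha g).trans hbig
  have htot : ∑ y ∈ S, ∑ i, (a (y - x i) + a (x i - y)) ≤ ∑ _y ∈ S, 2 * n * (r * M) := by
    rw [Finset.sum_comm]
    calc ∑ i, ∑ y ∈ S, (a (y - x i) + a (x i - y))
        ≤ ∑ _i : Fin n, (r * S.card * M + r * S.card * M) := by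
          refine Finset.sum_le_sum fun i _ => ?_
          rw [Finset.sum_add_distrib]
          refine add_le_add (hinj _ (sub_left_injective) fun y hy => sub_mem_sgBox hy (hc i))
            (hinj _ sub_right_injective fun y hy => ?_)
          rw [hS', add_comm]
          exact sub_mem_sgBox (hc i) hy
      _ = ∑ _y ∈ S, 2 * n * (r * M) := by
          simp
          ring
  obtain ⟨y, hy, h⟩ := Finset.exists_le_of_sum_le (sgBox_nonempty K N) htot
  exact ⟨y, (mem_sgBox.1 hy).2, h⟩

lemma exists_sum_differences_le {d : ℕ} {K : AddSubgroup (Fin d → ℤ)} {a : (Fin d → ℤ) → ℝ}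
    (ha : ∀ g, 0 ≤ a g) {M r : ℝ} (hM : 0 ≤ M) (hr : 1 < r)
    (hlim : ∀ᶠ N in atTop, avgOn (sgBox (boxZ d) K N) a ≤ M) (n : ℕ) :
    ∃ x : Fin n → Fin d → ℤ, (∀ i, x i ∈ K) ∧
      ∑ i, ∑ j, a (x j - x i) ≤ n * a 0 + n ^ 2 * (r * M) := by
  induction n with
  | zero => exact ⟨Fin.elim0, fun i => i.elim0, by simp⟩
  | succ n ih =>
    obtain ⟨x, hx, hsum⟩ := ih
    obtain ⟨y, hy, hxy⟩ := exists_sum_translates_le ha hM hr hlim x hx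
    refine ⟨Fin.snoc (α := fun _ => Fin d → ℤ) x y, fun i => ?_, ?_⟩
    · refine Fin.lastCases ?_ (fun i => ?_) i
      · simpa using hy
      · simpa using hx i
    · simp only [Fin.sum_univ_castSucc, Fin.snoc_castSucc, Fin.snoc_last, sub_self,
        Finset.sum_add_distrib] at hxy ⊢
      have hrM : 0 ≤ r * M := mul_nonneg (by linarith) hM
      push_cast
      nlinarith

/-- A nonnegative function whose average over all differences of any finite tuple is at least `L`
has upper box averages at least `L`. -/
lemma le_limsup_avgOn_of_differences {d : ℕ} (K : AddSubgroup (Fin d → ℤ))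
    {a : (Fin d → ℤ) → ℝ} {D L : ℝ} (ha : ∀ g, a g ∈ Set.Icc 0 D)
    (hL : ∀ (n : ℕ) (x : Fin n → Fin d → ℤ), (∀ i, x i ∈ K) →
      (n : ℝ) ^ 2 * L ≤ ∑ i, ∑ j, a (x j - x i)) :
    L ≤ limsup (fun N => avgOn (sgBox (boxZ d) K N) a) atTop := by
  have hIcc : ∀ N, avgOn (sgBox (boxZ d) K N) a ∈ Set.Icc 0 D := fun N => avgOn_mem_Icc _ ha
  set M := limsup (fun N => avgOn (sgBox (boxZ d) K N) a) atTop with hM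
  have hM0 : 0 ≤ M := (limsup_mem_Icc hIcc).1
  have key : ∀ ε > 0, L ≤ (1 + ε) * (M + ε) := by
    intro ε hε
    have hlim : ∀ᶠ N in atTop, avgOn (sgBox (boxZ d) K N) a ≤ M + ε :=
      (eventually_lt_of_limsup_lt (lt_add_of_pos_right M hε)
        (isBoundedUnder_of ⟨D, fun N => (hIcc N).2⟩)).mono fun _ h => h.le
    have hn : ∀ n : ℕ, L ≤ a 0 * ((n : ℝ) + 1)⁻¹ + (1 + ε) * (M + ε) := by
      intro n
      obtain ⟨x, hx, hsum⟩ := exists_sum_differences_le (fun g => (ha g).1)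
        (by positivity : 0 ≤ M + ε) (by linarith : 1 < 1 + ε) hlim (n + 1)
      have h := (hL (n + 1) x hx).trans hsum
      push_cast at h
      have hpos : (0 : ℝ) < (n : ℝ) + 1 := by positivity
      refine le_of_mul_le_mul_left (h.trans_eq ?_) (pow_pos hpos 2)
      field_simp
    have hlim0 : Tendsto (fun n : ℕ => a 0 * ((n : ℝ) + 1)⁻¹ + (1 + ε) * (M + ε)) atTop
        (nhds (a 0 * 0 + (1 + ε) * (M + ε))) := by
      refine (Tendsto.const_mul _ ?_).add_const _
      simpa using tendsto_one_div_add_atTop_nhds_zero_nat (𝕜 := ℝ)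
    simpa using ge_of_tendsto' hlim0 hn
  have hcont : Tendsto (fun ε : ℝ => (1 + ε) * (M + ε)) (nhdsWithin 0 (Set.Ioi 0))
      (nhds ((1 + 0) * (M + 0))) :=
    (Continuous.tendsto (by fun_prop) 0).mono_left nhdsWithin_le_nhds
  simpa using ge_of_tendsto hcont (eventually_mem_nhdsWithin.mono fun ε hε => key ε hε)

/-- **Lemma.** `⦀f ⊗ conj f⦀_{H₁^{[1]},…,H_k^{[1]}} ≤ ⦀f⦀²_{H₁,…,H_k,H}`, where the
left-hand seminorm is computed in the product system; here `k = m + 1` and the seminorms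
are expressed via their `2^k`-th powers `hkPow`. -/
theorem stmt7 {X : Type*} [MeasurableSpace X] (μ : Measure X) [IsProbabilityMeasure μ]
    (d m : ℕ) (hd : 0 < d)
    (T : (Fin d → ℤ) → X → X)
    (hT0 : T 0 = id) (hTadd : ∀ g h, T (g + h) = T g ∘ T h)
    (hTmp : ∀ g, MeasurePreserving (T g) μ μ)
    (H : Fin (m + 1) → AddSubgroup (Fin d → ℤ)) (Hx : AddSubgroup (Fin d → ℤ))
    (f : X → ℂ) (hf : Measurable f) (hfb : ∃ C, ∀ x, ‖f x‖ ≤ C) :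
    (hkPow (fun N => boxZ d N ×ˢ boxZ d N) (μ.prod μ)
          (fun g xy => (T g.1 xy.1, T g.2 xy.2)) m (fun i => diagSG (H i))
          (fun xy => f xy.1 * (starRingEnd ℂ) (f xy.2))) ^ ((1 : ℝ) / 2 ^ (m + 1))
      ≤ ((hkPow (boxZ d) μ T (m + 1) (Fin.snoc H Hx) f) ^ ((1 : ℝ) / 2 ^ (m + 2))) ^ 2 := by
  have hb : BddMeas f := ⟨hf, hfb⟩
  have hprodMeas : ∀ (g : (Fin d → ℤ) × (Fin d → ℤ)),
      Measurable fun xy : X × X => (T g.1 xy.1, T g.2 xy.2) := fun g =>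
    ((hTmp g.1).prod (hTmp g.2)).measurable
  have hF : BddMeas fun xy : X × X => f xy.1 * (starRingEnd ℂ) (f xy.2) :=
    (hb.comp measurable_fst).mul (hb.comp measurable_snd).conj
  obtain ⟨C, hC⟩ := hfb
  obtain ⟨C', hC'⟩ := hF.bdd
  obtain ⟨D, hD⟩ := exists_hkPow_mem_Icc (boxZ d) μ (fun g => (hTmp g).measurable) m (C * C)
  obtain ⟨D', hD'⟩ := exists_hkPow_mem_Icc (fun N => boxZ d N ×ˢ boxZ d N) (μ.prod μ)
    hprodMeas m C'
  have hDg : ∀ g, hkPow (boxZ d) μ T m H (fun x => f x * (starRingEnd ℂ) (f (T g x)))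
      ∈ Set.Icc 0 D := fun g => by
    refine hD _ _ (hb.mul (hb.comp (hTmp g).measurable).conj).measurable fun x => ?_
    rw [norm_mul, RCLike.norm_conj]
    exact mul_le_mul (hC _) (hC _) (norm_nonneg _) ((norm_nonneg _).trans (hC x))
  have hL0 := (hD' (fun i => diagSG (H i)) _ hF.measurable hC').1
  have hR : hkPow (boxZ d) μ T (m + 1) (Fin.snoc H Hx) f
      = limsup (fun N => avgOn (sgBox (boxZ d) Hx N) fun g =>
        hkPow (boxZ d) μ T m H (fun x => f x * (starRingEnd ℂ) (f (T g x)))) atTop := by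
    rw [hkPow_succ]
    simp only [Fin.snoc_last, Fin.snoc_castSucc]
  have hmain := le_limsup_avgOn_of_differences Hx hDg fun n x _ => by
    have h := sq_card_mul_hkPow_le hT0 hTadd hTmp x m H hb
    rwa [Fintype.card_fin, Fintype.sum_prod_type] at h
  rw [← hR] at hmain
  have hR0 := hL0.trans hmain
  refine (Real.rpow_le_rpow hL0 hmain (by positivity)).trans_eq ?_
  rw [← Real.rpow_mul_natCast hR0]
  congr 1
  push_cast
  rw [pow_succ (2 : ℝ) (m + 1)]
  field_simp
end
end
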